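/- arXiv:0909.1536 — 3 statements merged into one kernel-verified Lean document; each statement's English description precedes it below -/
import Mathlib

section
/- Let n ≥ 1 and let λ be a partition of n with ℓ = ℓ(λ) parts. Then the genus-zero one-part double Hurwitz number satisfies N(λ, (n); ℓ − 1) / n! = (ℓ − 1)! · n^{ℓ−2} / |Aut(λ)|, where n^{ℓ−2} is computed in ℚ (so it equals 1/n when ℓ = 1). Equivalently, the number of tuples (α, τ_1, …, τ_{ℓ−1}), with α a permutation of {1, …, n} of cycle type λ and each τ_i a transposition such that τ_{ℓ−1} ⋯ τ_1 · α is an n-cycle, equals n! · (ℓ − 1)! · n^{ℓ−2} / |Aut(λ)|. -/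
open Equiv Nat

/-- The one-part partition `(n)` of `n` (for `n ≥ 1`). -/
def onePartPartition (n : ℕ) (hn : 1 ≤ n) : Nat.Partition n :=
  ⟨{n}, fun hi => by simp_all; omega, by simp⟩

/-- `N(λ, ρ; b)`: the number of tuples `(α, τ₁, …, τ_b)` where `α` is a permutation of
`{1, …, n}` with cycle type `λ`, each `τᵢ` is a transposition, and `τ_b ⋯ τ₁ · α` has
cycle type `ρ`. -/
noncomputable def hurwitzN (n b : ℕ) (lam rho : Nat.Partition n) : ℕ :=
  Nat.card {p : Equiv.Perm (Fin n) × (Fin b → Equiv.Perm (Fin n)) //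
    p.1.partition.parts = lam.parts ∧
    (∀ i, (p.2 i).IsSwap) ∧
    ((List.ofFn p.2).reverse.prod * p.1).partition.parts = rho.parts}

/-- `|Aut(λ)| = ∏ₘ (mₘ(λ))!`, the product over part sizes of the factorial of the
multiplicity of that part size. -/
def autCard {n : ℕ} (lam : Nat.Partition n) : ℕ :=
  ∏ m ∈ lam.parts.toFinset, (lam.parts.count m)!


namespace HW
set_option linter.unusedSectionVars false
variable {V : Type*} [Fintype V] [DecidableEq V]

def cls (α : Perm V) (x : V) : Finset V := Finset.univ.filter (fun y => α.SameCycle x y)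

def S (α : Perm V) : Finset (Finset V) := Finset.univ.image (cls α)

lemma mem_cls {α : Perm V} {x y : V} : y ∈ cls α x ↔ α.SameCycle x y := by simp [cls]

lemma cls_eq {α : Perm V} {x y : V} : cls α x = cls α y ↔ α.SameCycle x y := by
  constructor
  · intro h
    have : y ∈ cls α x := by rw [h, mem_cls]
    exact mem_cls.1 this
  · intro h
    ext z
    simp only [mem_cls]
    exact ⟨fun k => h.symm.trans k, fun k => h.trans k⟩

lemma cls_card_pos (α : Perm V) (x : V) : 0 < (cls α x).card :=
  Finset.card_pos.2 ⟨x, mem_cls.2 (Perm.SameCycle.refl _ _)⟩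

lemma same_le {β : Perm V} {r : V → V → Prop} (hr : Equivalence r)
    (h : ∀ x, r x (β x)) {x y : V} (hxy : β.SameCycle x y) : r x y := by
  obtain ⟨i, hi⟩ := hxy
  rw [← hi]
  clear hi
  induction i using Int.induction_on with
  | zero => exact hr.refl _
  | succ i ih =>
    rw [zpow_add_one, ((Commute.refl β).zpow_left _).eq]
    exact hr.trans ih (h _)
  | pred i ih =>
    rw [zpow_sub_one, (((Commute.refl β).inv_right).zpow_left _).eq]
    refine hr.trans ih (hr.symm ?_)
    have := h (β⁻¹ ((β ^ (-(i:ℤ))) x))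
    simpa using this

lemma swap_rel {α : Perm V} {r : V → V → Prop} (hr : Equivalence r) {a b : V} (hab : r a b)
    (h : ∀ x y, α.SameCycle x y → r x y) {x y : V} (hxy : (swap a b * α).SameCycle x y) : r x y := by
  refine same_le hr (fun x => ?_) hxy
  have h1 : r x (α x) := h _ _ ⟨1, by simp⟩
  rw [Perm.mul_apply, swap_apply_def]
  split_ifs with h2 h3
  · rw [h2] at h1; exact hr.trans h1 hab
  · rw [h3] at h1; exact hr.trans h1 (hr.symm hab)
  · exact h1

lemma same_equiv (α : Perm V) : Equivalence α.SameCycle :=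
  ⟨fun _ => Perm.SameCycle.refl _ _, fun h => h.symm, fun h k => h.trans k⟩

lemma joined {α : Perm V} {a b : V} (hab : ¬ α.SameCycle a b) : (swap a b * α).SameCycle a b := by
  have hex : ∃ k : ℕ, 0 < k ∧ (α ^ k) a = a :=
    ⟨orderOf α, orderOf_pos α, by simp [pow_orderOf_eq_one]⟩
  classical
  obtain ⟨hk, hka⟩ := Nat.find_spec hex
  have hmin : ∀ m < Nat.find hex, ¬ (0 < m ∧ (α ^ m) a = a) := fun m hm => Nat.find_min hex hm
  generalize Nat.find hex = k at hk hka hmin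
  have key : ∀ i, i < k → ((swap a b * α) ^ i) a = (α ^ i) a := by
    intro i
    induction i with
    | zero => simp
    | succ i ih =>
      intro hi
      rw [_root_.pow_succ', Perm.mul_apply, ih (by omega), Perm.mul_apply, ← Perm.mul_apply α, ← _root_.pow_succ']
      apply swap_apply_of_ne_of_ne
      · intro h; exact hmin _ hi ⟨by omega, h⟩
      · intro h; exact hab ⟨(i+1 : ℕ), by rw [zpow_natCast]; exact h⟩
  obtain ⟨j, rfl⟩ : ∃ j, k = j + 1 := ⟨k - 1, by omega⟩
  refine ⟨(j + 1 : ℕ), ?_⟩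
  rw [zpow_natCast, _root_.pow_succ', Perm.mul_apply, key j (by omega), Perm.mul_apply, ← Perm.mul_apply α,
    ← _root_.pow_succ', hka, swap_apply_left]

lemma swap_le {α : Perm V} {a b : V} (hab : ¬ α.SameCycle a b) {x y : V} (h : α.SameCycle x y) :
    (swap a b * α).SameCycle x y := by
  have : α = swap a b * (swap a b * α) := by rw [← mul_assoc, swap_mul_self, one_mul]
  rw [this] at h
  exact swap_rel (same_equiv _) (joined hab) (fun _ _ k => k) h

lemma le_swap {α : Perm V} {a b : V} {x y : V}
    (h : (swap a b * α).SameCycle x y) : α.SameCycle x y ∨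
      ((α.SameCycle a x ∨ α.SameCycle b x) ∧ (α.SameCycle a y ∨ α.SameCycle b y)) := by
  refine swap_rel (α := α) (r := fun x y => α.SameCycle x y ∨
      ((α.SameCycle a x ∨ α.SameCycle b x) ∧ (α.SameCycle a y ∨ α.SameCycle b y)))
      ⟨fun _ => Or.inl (Perm.SameCycle.refl _ _), ?_, ?_⟩ ?_ (fun _ _ k => Or.inl k) h
  · rintro x y (h | ⟨h, k⟩)
    · exact Or.inl h.symm
    · exact Or.inr ⟨k, h⟩
  · rintro x y z (h | ⟨h, k⟩) (h' | ⟨h', k'⟩)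
    · exact Or.inl (h.trans h')
    · exact Or.inr ⟨h'.imp (fun t => t.trans h.symm) (fun t => t.trans h.symm), k'⟩
    · exact Or.inr ⟨h, k.imp (fun t => t.trans h') (fun t => t.trans h')⟩
    · exact Or.inr ⟨h, k'⟩
  · exact Or.inr ⟨Or.inl (Perm.SameCycle.refl _ _), Or.inr (Perm.SameCycle.refl _ _)⟩

/-- untouched classes -/
def R (α : Perm V) (a b : V) : Finset (Finset V) := (S α).filter (fun s => a ∉ s ∧ b ∉ s)

lemma S_eq (α : Perm V) (a b : V) : S α = insert (cls α a) (insert (cls α b) (R α a b)) := by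
  ext s
  simp only [S, R, Finset.mem_insert, Finset.mem_filter, Finset.mem_image, Finset.mem_univ, true_and]
  constructor
  · rintro ⟨x, rfl⟩
    by_cases h1 : α.SameCycle x a
    · left; exact cls_eq.2 h1
    by_cases h2 : α.SameCycle x b
    · right; left; exact cls_eq.2 h2
    right; right; exact ⟨⟨x, rfl⟩, by rwa [mem_cls], by rwa [mem_cls]⟩
  · rintro (h | h | h)
    · exact ⟨a, h.symm⟩
    · exact ⟨b, h.symm⟩
    · exact h.1

lemma S_swap {α : Perm V} {a b : V} (hab : ¬ α.SameCycle a b) :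
    S (swap a b * α) = insert (cls α a ∪ cls α b) (R α a b) := by
  have hA : cls (swap a b * α) a = cls α a ∪ cls α b := by
    ext y
    simp only [Finset.mem_union, mem_cls]
    constructor
    · intro h
      rcases le_swap h with h | h
      · exact Or.inl h
      · exact h.2
    · rintro (h | h)
      · exact swap_le hab h
      · exact (joined hab).trans (swap_le hab h)
  have hB : cls (swap a b * α) b = cls α a ∪ cls α b := by
    rw [← hA, cls_eq]; exact (joined hab).symm
  have hO : ∀ x, ¬ α.SameCycle a x → ¬ α.SameCycle b x → cls (swap a b * α) x = cls α x := by
    intro x h1 h2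
    ext y
    simp only [mem_cls]
    constructor
    · intro h
      rcases le_swap h with h | h
      · exact h
      · tauto
    · exact swap_le hab
  ext s
  simp only [S, R, Finset.mem_insert, Finset.mem_filter, Finset.mem_image, Finset.mem_univ, true_and]
  constructor
  · rintro ⟨x, rfl⟩
    by_cases h1 : α.SameCycle a x
    · left; rw [← hA]; exact cls_eq.2 (swap_le hab h1).symm
    by_cases h2 : α.SameCycle b x
    · left; rw [← hB]; exact cls_eq.2 (swap_le hab h2).symm
    right; rw [hO x h1 h2]
    exact ⟨⟨x, rfl⟩, by rw [mem_cls]; exact fun h => h1 h.symm, by rw [mem_cls]; exact fun h => h2 h.symm⟩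
  · rintro (h | ⟨⟨x, rfl⟩, h1, h2⟩)
    · exact ⟨a, by rw [h, hA]⟩
    · rw [mem_cls] at h1 h2
      exact ⟨x, hO x (fun h => h1 h.symm) (fun h => h2 h.symm)⟩

lemma notMem1 {α : Perm V} {a b : V} (hab : ¬ α.SameCycle a b) :
    cls α a ∉ insert (cls α b) (R α a b) := by
  simp only [Finset.mem_insert, cls_eq, R, Finset.mem_filter, mem_cls]
  rintro (h | h)
  · exact hab h
  · exact h.2.1 (Perm.SameCycle.refl _ _)

lemma notMem2 {α : Perm V} {a b : V} : cls α b ∉ R α a b := by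
  simp only [R, Finset.mem_filter, mem_cls]
  exact fun h => h.2.2 (Perm.SameCycle.refl _ _)

lemma notMem3 {α : Perm V} {a b : V} : cls α a ∪ cls α b ∉ R α a b := by
  simp only [R, Finset.mem_filter, Finset.mem_union, mem_cls]
  exact fun h => h.2.1 (Or.inl (Perm.SameCycle.refl _ _))

lemma card_union' {α : Perm V} {a b : V} (hab : ¬ α.SameCycle a b) :
    (cls α a ∪ cls α b).card = (cls α a).card + (cls α b).card := by
  apply Finset.card_union_of_disjoint
  rw [Finset.disjoint_left]
  intro x h1 h2
  rw [mem_cls] at h1 h2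
  exact hab (h1.trans h2.symm)

lemma card_S_swap {α : Perm V} {a b : V} (hab : ¬ α.SameCycle a b) :
    (S (swap a b * α)).card + 1 = (S α).card := by
  rw [S_swap hab, S_eq α a b, Finset.card_insert_of_notMem notMem3,
    Finset.card_insert_of_notMem (notMem1 hab), Finset.card_insert_of_notMem notMem2]

def P (α : Perm V) : ℚ := ∏ s ∈ S α, (s.card : ℚ)

lemma P_swap {α : Perm V} {a b : V} (hab : ¬ α.SameCycle a b) :
    P (swap a b * α) = P α * (((cls α a).card : ℚ)⁻¹ + ((cls α b).card : ℚ)⁻¹) := by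
  have h1 : ((cls α a).card : ℚ) ≠ 0 := by exact_mod_cast (cls_card_pos α a).ne'
  have h2 : ((cls α b).card : ℚ) ≠ 0 := by exact_mod_cast (cls_card_pos α b).ne'
  rw [P, P, S_swap hab, S_eq α a b, Finset.prod_insert notMem3, Finset.prod_insert (notMem1 hab),
    Finset.prod_insert notMem2, card_union' hab]
  push_cast
  field_simp
  ring

lemma card_S_swap_same {α : Perm V} {a b : V} (hab : α.SameCycle a b) :
    (S α).card ≤ (S (swap a b * α)).card := by
  have h : ∀ x y, (swap a b * α).SameCycle x y → α.SameCycle x y := fun x y =>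
    swap_rel (same_equiv α) hab (fun _ _ k => k)
  have : S α = (S (swap a b * α)).image (fun s => s.biUnion (cls α)) := by
    rw [S, S, Finset.image_image]
    congr 1
    funext x
    ext y
    simp only [Function.comp, Finset.mem_biUnion, mem_cls]
    exact ⟨fun k => ⟨x, Perm.SameCycle.refl _ _, k⟩, fun ⟨z, hz, k⟩ => (h _ _ hz).trans k⟩
  rw [this]
  exact Finset.card_image_le

lemma card_S_le (α : Perm V) (a b : V) : (S α).card ≤ (S (swap a b * α)).card + 1 := by
  by_cases h : α.SameCycle a b
  · exact (card_S_swap_same h).trans (Nat.le_succ _)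
  · exact (card_S_swap h).ge

lemma sum_inv (α : Perm V) : ∑ x, ((cls α x).card : ℚ)⁻¹ = (S α).card := by
  rw [Finset.sum_comp (fun s : Finset V => ((s.card : ℚ))⁻¹) (cls α)]
  change ∑ s ∈ S α, _ = _
  rw [Finset.card_eq_sum_ones, Nat.cast_sum]
  refine Finset.sum_congr rfl fun s hs => ?_
  simp only [S, Finset.mem_image, Finset.mem_univ, true_and] at hs
  obtain ⟨x, rfl⟩ := hs
  have : (Finset.univ.filter fun y => cls α y = cls α x) = cls α x := by
    ext y
    simp only [Finset.mem_filter, Finset.mem_univ, true_and, cls_eq, mem_cls]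
    exact ⟨fun h => h.symm, fun h => h.symm⟩
  rw [this, nsmul_eq_mul]
  have h1 : ((cls α x).card : ℚ) ≠ 0 := by exact_mod_cast (cls_card_pos α x).ne'
  simp [h1]

lemma sum_pairs (α : Perm V) :
    ∑ a, ∑ b, (if α.SameCycle a b then (0:ℚ) else
      (((cls α a).card : ℚ)⁻¹ + ((cls α b).card : ℚ)⁻¹)) =
    2 * (Fintype.card V * ((S α).card - 1)) := by
  have key : ∑ a, ∑ b, (if α.SameCycle a b then (0:ℚ) else ((cls α a).card : ℚ)⁻¹) =
      Fintype.card V * ((S α).card - 1) := by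
    have : ∀ a, ∑ b, (if α.SameCycle a b then (0:ℚ) else ((cls α a).card : ℚ)⁻¹) =
        Fintype.card V * ((cls α a).card : ℚ)⁻¹ - 1 := by
      intro a
      have h1 : ((cls α a).card : ℚ) ≠ 0 := by exact_mod_cast (cls_card_pos α a).ne'
      have : ∀ b, (if α.SameCycle a b then (0:ℚ) else ((cls α a).card : ℚ)⁻¹) =
        ((cls α a).card : ℚ)⁻¹ - (if α.SameCycle a b then ((cls α a).card : ℚ)⁻¹ else 0) := by
        intro b; split_ifs <;> simp
      simp_rw [this]
      rw [Finset.sum_sub_distrib, ← Finset.sum_filter]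
      change _ - ∑ b ∈ cls α a, _ = _
      simp [h1]
    simp_rw [this]
    rw [Finset.sum_sub_distrib, ← Finset.mul_sum, sum_inv]
    simp; ring
  have : ∀ a b, (if α.SameCycle a b then (0:ℚ) else
      (((cls α a).card : ℚ)⁻¹ + ((cls α b).card : ℚ)⁻¹)) =
      (if α.SameCycle a b then (0:ℚ) else ((cls α a).card : ℚ)⁻¹) +
      (if α.SameCycle b a then (0:ℚ) else ((cls α b).card : ℚ)⁻¹) := by
    intro a b
    by_cases h : α.SameCycle a b
    · rw [if_pos h, if_pos h, if_pos h.symm, add_zero]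
    · rw [if_neg h, if_neg h, if_neg (fun k => h k.symm)]
  simp_rw [this, Finset.sum_add_distrib]
  rw [Finset.sum_comm (f := fun a b => if α.SameCycle b a then (0:ℚ) else ((cls α b).card : ℚ)⁻¹), key]
  ring

open Classical in
lemma sum_swaps (f : Perm V → ℚ) :
    ∑ a, ∑ b, (if a = b then 0 else f (swap a b)) = 2 * ∑ τ with Perm.IsSwap τ, f τ := by
  rw [← Finset.sum_product', Finset.univ_product_univ]
  have : ∀ p : V × V, (if p.1 = p.2 then 0 else f (swap p.1 p.2)) =
    if p.1 ≠ p.2 then f (swap p.1 p.2) else 0 := by intro p; split_ifs <;> simp_all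
  simp_rw [this]
  rw [← Finset.sum_filter, Finset.sum_comp f (fun p : V × V => swap p.1 p.2), Finset.mul_sum]
  refine Finset.sum_congr ?_ ?_
  · ext τ
    rw [Finset.mem_filter]
    simp only [Finset.mem_image, Finset.mem_filter, Finset.mem_univ, true_and, Prod.exists]
    constructor
    · rintro ⟨a, b, h, rfl⟩; exact ⟨a, b, h, rfl⟩
    · rintro ⟨a, b, h, rfl⟩; exact ⟨a, b, h, rfl⟩
  · intro τ hτ
    simp only [Finset.mem_filter, Finset.mem_univ, true_and] at hτ
    obtain ⟨a, b, h, rfl⟩ := hτ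
    have : ({p ∈ {p : V × V | p.1 ≠ p.2} | swap p.1 p.2 = swap a b} : Finset (V × V)) = {(a, b), (b, a)} := by
      ext ⟨x, y⟩
      simp only [Finset.mem_filter, Finset.mem_univ, true_and, Finset.mem_insert, Finset.mem_singleton,
        Prod.mk.injEq]
      constructor
      · rintro ⟨h1, h2⟩
        have e1 := congrArg (fun σ => σ x) h2
        simp only [swap_apply_left] at e1
        rw [swap_apply_def] at e1
        split_ifs at e1 with h3 h4
        · exact Or.inl ⟨h3, e1⟩
        · exact Or.inr ⟨h4, e1⟩
        · exact absurd e1.symm h1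
      · rintro (⟨rfl, rfl⟩ | ⟨rfl, rfl⟩)
        · exact ⟨h, rfl⟩
        · exact ⟨h.symm, swap_comm _ _⟩
    rw [this, Finset.card_pair (by simp [h])]
    simp

lemma parts_eq (α : Perm V) : α.partition.parts = (S α).val.map Finset.card := by
  have hS : S α = (α.cycleFactorsFinset.image Perm.support) ∪ (α.supportᶜ.image singleton) := by
    ext s
    simp only [S, Finset.mem_union, Finset.mem_image, Finset.mem_univ, true_and, Finset.mem_compl]
    have e1 : ∀ x, x ∈ α.support → (α.cycleOf x).support = cls α x := by
      intro x hx
      ext y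
      rw [Perm.mem_support_cycleOf_iff, mem_cls]
      tauto
    have e2 : ∀ x, x ∉ α.support → {x} = cls α x := by
      intro x hx
      rw [Perm.notMem_support] at hx
      ext y
      rw [mem_cls, Finset.mem_singleton]
      constructor
      · rintro rfl; exact Perm.SameCycle.refl _ _
      · rintro ⟨i, rfl⟩
        exact Perm.zpow_apply_eq_self_of_apply_eq_self hx i
    constructor
    · rintro ⟨x, rfl⟩
      by_cases hx : x ∈ α.support
      · left; exact ⟨α.cycleOf x, Perm.cycleOf_mem_cycleFactorsFinset_iff.2 hx, e1 x hx⟩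
      · right; exact ⟨x, hx, e2 x hx⟩
    · rintro (⟨c, hc, rfl⟩ | ⟨x, hx, rfl⟩)
      · obtain ⟨x, hx⟩ := (Perm.mem_cycleFactorsFinset_iff.1 hc).1.nonempty_support
        have := Perm.cycle_is_cycleOf hx hc
        exact ⟨x, by rw [this, e1 x (Perm.mem_cycleFactorsFinset_support_le hc hx)]⟩
      · exact ⟨x, (e2 x hx).symm⟩
  have hdisj : Disjoint (α.cycleFactorsFinset.image Perm.support) (α.supportᶜ.image singleton) := by
    rw [Finset.disjoint_left]
    rintro s h1 h2
    simp only [Finset.mem_image, Finset.mem_compl] at h1 h2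
    obtain ⟨c, hc, rfl⟩ := h1
    obtain ⟨x, hx, h⟩ := h2
    apply hx
    apply Perm.mem_cycleFactorsFinset_support_le hc
    rw [← h]; simp
  have hinj : Set.InjOn (Perm.support) (α.cycleFactorsFinset : Set (Perm V)) := by
    intro c hc d hd h
    obtain ⟨x, hx⟩ := (Perm.mem_cycleFactorsFinset_iff.1 hc).1.nonempty_support
    rw [Perm.cycle_is_cycleOf hx hc, Perm.cycle_is_cycleOf (h ▸ hx) hd]
  rw [hS, ← Finset.disjUnion_eq_union _ _ hdisj, Finset.disjUnion_val, Multiset.map_add,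
    Finset.image_val_of_injOn hinj, Finset.image_val_of_injOn (Finset.singleton_injective.injOn),
    Perm.parts_partition, Multiset.map_map, Multiset.map_map, Perm.cycleType_def]
  congr 1
  simp [Finset.card_compl]

lemma card_parts (α : Perm V) : Multiset.card α.partition.parts = (S α).card := by
  rw [parts_eq]; simp

lemma P_eq (α : Perm V) : P α = (α.partition.parts.prod : ℕ) := by
  rw [parts_eq, P, Finset.prod_map_val]; simp

lemma one_part (α : Perm V) :
    α.partition.parts = {Fintype.card V} ↔ (S α).card = 1 := by
  rw [← card_parts]
  constructor
  · intro h; rw [h]; simp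
  · intro h
    obtain ⟨m, hm⟩ := Multiset.card_eq_one.1 h
    have := α.partition.parts_sum
    rw [hm] at this ⊢
    simp at this
    rw [this]

/-- number of completing sequences -/
noncomputable def F (b : ℕ) (α : Perm V) : ℕ :=
  Nat.card {t : Fin b → Perm V // (∀ i, (t i).IsSwap) ∧
    (S ((List.ofFn t).reverse.prod * α)).card = 1}

open Classical in
lemma F_succ (b : ℕ) (α : Perm V) :
    F (b + 1) α = ∑ τ with Perm.IsSwap τ, F b (τ * α) := by
  have e : {t : Fin (b+1) → Perm V // (∀ i, (t i).IsSwap) ∧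
      (S ((List.ofFn t).reverse.prod * α)).card = 1} ≃
      Σ τ : {τ : Perm V // τ.IsSwap}, {t : Fin b → Perm V // (∀ i, (t i).IsSwap) ∧
      (S ((List.ofFn t).reverse.prod * (τ.1 * α))).card = 1} :=
    { toFun := fun t => ⟨⟨t.1 0, t.2.1 0⟩, ⟨Fin.tail t.1, fun i => t.2.1 i.succ, by
        have := t.2.2
        rw [List.ofFn_succ, List.reverse_cons, List.prod_append, List.prod_singleton, mul_assoc] at this
        exact this⟩⟩
      invFun := fun p => ⟨Fin.cons p.1.1 p.2.1, by
        intro i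
        refine Fin.cases ?_ (fun j => ?_) i
        · exact p.1.2
        · exact p.2.2.1 j, by
        rw [List.ofFn_succ, List.reverse_cons, List.prod_append, List.prod_singleton, mul_assoc]
        exact p.2.2.2⟩
      left_inv := fun t => by
        apply Subtype.ext
        exact Fin.cons_self_tail t.1
      right_inv := fun p => by
        rcases p with ⟨⟨τ, h⟩, ⟨t, h'⟩⟩
        rfl }
  rw [F, Nat.card_congr e, Nat.card_sigma]
  exact (Finset.sum_subtype (Finset.univ.filter Perm.IsSwap) (p := Perm.IsSwap) (by simp)
    (fun τ => F b (τ * α))).symm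

lemma F_zero_of_lt (b : ℕ) (α : Perm V) (h : b + 1 < (S α).card) : F b α = 0 := by
  classical
  induction b generalizing α with
  | zero =>
    rw [F, Nat.card_eq_zero]
    left
    constructor
    rintro ⟨t, h1, h2⟩
    simp at h2
    omega
  | succ b ih =>
    rw [F_succ]
    refine Finset.sum_eq_zero fun τ hτ => ?_
    simp only [Finset.mem_filter, Finset.mem_univ, true_and] at hτ
    obtain ⟨x, y, -, rfl⟩ := hτ
    apply ih
    have := card_S_le α x y
    omega

lemma F_main (b : ℕ) (α : Perm V) (h : (S α).card = b + 1) :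
    (Fintype.card V : ℚ) * F b α = b ! * (Fintype.card V : ℚ) ^ b * P α := by
  classical
  induction b generalizing α with
  | zero =>
    have h1 : F 0 α = 1 := by
      rw [F, Nat.card_eq_one_iff_unique]
      refine ⟨⟨fun s t => Subtype.ext (Subsingleton.elim _ _)⟩, ⟨⟨Fin.elim0, fun i => i.elim0, by simpa using h⟩⟩⟩
    have hP : P α = Fintype.card V := by
      have h2 := h
      rw [← card_parts] at h2
      obtain ⟨m, hm⟩ := Multiset.card_eq_one.1 h2
      have h3 := α.partition.parts_sum
      rw [hm] at h3
      rw [P_eq, hm]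
      simpa using h3
    rw [h1, hP]; simp
  | succ b ih =>
    have h2 : (2:ℚ) ≠ 0 := by norm_num
    apply mul_left_cancel₀ h2
    rw [F_succ, Nat.cast_sum, mul_left_comm, ← sum_swaps (fun τ => (F b (τ * α) : ℚ)), Finset.mul_sum]
    simp_rw [Finset.mul_sum]
    have : ∀ x y, (Fintype.card V : ℚ) * (if x = y then 0 else (F b (swap x y * α) : ℚ)) =
        (b ! * (Fintype.card V : ℚ) ^ b * P α) * (if α.SameCycle x y then (0:ℚ) else
          (((cls α x).card : ℚ)⁻¹ + ((cls α y).card : ℚ)⁻¹)) := by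
      intro x y
      by_cases hs : α.SameCycle x y
      · rw [if_pos hs, F_zero_of_lt b _ (by have := card_S_swap_same hs; omega)]
        simp
      · have hne : x ≠ y := by rintro rfl; exact hs (Perm.SameCycle.refl _ _)
        rw [if_neg hs, if_neg hne, ih _ (by have := card_S_swap hs; omega), P_swap hs]
        ring
    simp_rw [this, ← Finset.mul_sum]
    rw [sum_pairs, h, Nat.factorial_succ]
    push_cast
    ring


lemma class_count (n : ℕ) (lam : Nat.Partition n) :
    (Finset.univ.filter fun α : Perm (Fin n) => α.partition.parts = lam.parts).card *
      (lam.parts.prod * autCard lam) = n ! := by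
  set m := lam.parts.filter (2 ≤ ·) with hm
  set k := lam.parts.count 1 with hk
  have hone : lam.parts.filter (fun x => ¬ 2 ≤ x) = Multiset.replicate k 1 := by
    rw [hk, ← Multiset.filter_eq']
    apply Multiset.filter_congr
    intro x hx
    have := lam.parts_pos hx
    omega
  have hdec : lam.parts = m + Multiset.replicate k 1 := by
    rw [← hone, hm, Multiset.filter_add_not]
  have hsum : m.sum + k = n := by
    have := lam.parts_sum
    rw [hdec] at this
    simpa using this
  have hfil : (Finset.univ.filter fun α : Perm (Fin n) => α.partition.parts = lam.parts) =
      Finset.univ.filter fun α : Perm (Fin n) => α.cycleType = m := by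
    ext α
    simp only [Finset.mem_filter, Finset.mem_univ, true_and]
    constructor
    · intro h
      rw [← Perm.filter_parts_partition_eq_cycleType, h]
    · intro h
      rw [Perm.parts_partition, ← Perm.sum_cycleType, h, hdec, Fintype.card_fin]
      congr 2
      omega
  have h1m : 1 ∉ m := by simp [hm]
  have haut : autCard lam = k ! * ∏ x ∈ m.toFinset, (m.count x)! := by
    have hsub : lam.parts.toFinset ⊆ insert 1 m.toFinset := by
      intro x hx
      rw [Multiset.mem_toFinset, hdec, Multiset.mem_add] at hx
      rw [Finset.mem_insert, Multiset.mem_toFinset]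
      rcases hx with h | h
      · exact Or.inr h
      · exact Or.inl (Multiset.eq_of_mem_replicate h)
    rw [autCard, Finset.prod_subset hsub, Finset.prod_insert (by simpa using h1m)]
    · congr 1
      refine Finset.prod_congr rfl fun x hx => ?_
      rw [Multiset.mem_toFinset] at hx
      have : x ≠ 1 := by rintro rfl; exact h1m hx
      rw [hdec, Multiset.count_add, Multiset.count_replicate, if_neg this.symm, add_zero]
    · intro x _ hx
      rw [Multiset.mem_toFinset] at hx
      rw [Multiset.count_eq_zero_of_notMem hx, Nat.factorial_zero]
  have hprod : lam.parts.prod = m.prod := by rw [hdec]; simp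
  have key := Perm.card_of_cycleType_mul_eq (Fin n) m
  rw [Fintype.card_fin, if_pos ⟨by omega, by simp [hm]⟩] at key
  rw [hfil, haut, hprod, ← key, show n - m.sum = k by omega]
  ring

lemma hurwitz_sum (n b : ℕ) (hn : 1 ≤ n) (lam : Nat.Partition n) :
    hurwitzN n b lam (onePartPartition n hn) =
      ∑ α : Perm (Fin n) with α.partition.parts = lam.parts, F b α := by
  have e : {p : Equiv.Perm (Fin n) × (Fin b → Equiv.Perm (Fin n)) //
    p.1.partition.parts = lam.parts ∧
    (∀ i, (p.2 i).IsSwap) ∧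
    ((List.ofFn p.2).reverse.prod * p.1).partition.parts = (onePartPartition n hn).parts} ≃
    Σ α : {α : Perm (Fin n) // α.partition.parts = lam.parts},
      {t : Fin b → Perm (Fin n) // (∀ i, (t i).IsSwap) ∧
      (S ((List.ofFn t).reverse.prod * α.1)).card = 1} :=
    { toFun := fun p => ⟨⟨p.1.1, p.2.1⟩, ⟨p.1.2, p.2.2.1, by
        rw [← one_part]; have := p.2.2.2; rw [this]; simp [onePartPartition]⟩⟩
      invFun := fun q => ⟨(q.1.1, q.2.1), q.1.2, q.2.2.1, by
        have := q.2.2.2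
        rw [← one_part] at this
        rw [this]; simp [onePartPartition]⟩
      left_inv := fun p => rfl
      right_inv := fun q => rfl }
  rw [hurwitzN, Nat.card_congr e, Nat.card_sigma]
  exact (Finset.sum_subtype (Finset.univ.filter
    fun α : Perm (Fin n) => α.partition.parts = lam.parts) (by simp) (fun α => F b α)).symm

end HW

/-- The genus-zero one-part double Hurwitz number:
`N(λ, (n); ℓ−1) / n! = (ℓ−1)! ⋅ n^{ℓ−2} / |Aut(λ)|` (with `n^{ℓ−2}` computed in `ℚ`). -/
theorem genus_zero_one_part_double_hurwitz (n : ℕ) (hn : 1 ≤ n) (lam : Nat.Partition n) :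
    (hurwitzN n (Multiset.card lam.parts - 1) lam (onePartPartition n hn) : ℚ) / n ! =
      ((Multiset.card lam.parts - 1)! : ℚ) *
        (n : ℚ) ^ ((Multiset.card lam.parts : ℤ) - 2) / autCard lam := by
  obtain ⟨b, hb⟩ : ∃ b, Multiset.card lam.parts = b + 1 := by
    have : Multiset.card lam.parts ≠ 0 := by
      intro h
      rw [Multiset.card_eq_zero] at h
      have := lam.parts_sum
      rw [h] at this
      simp at this
      omega
    exact ⟨_, (Nat.succ_pred_eq_of_ne_zero this).symm⟩
  have hn0 : (n : ℚ) ≠ 0 := by exact_mod_cast (by omega : n ≠ 0)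
  have hcc := HW.class_count n lam
  have hnf : (n ! : ℚ) ≠ 0 := by exact_mod_cast Nat.factorial_ne_zero n
  have haut : (autCard lam : ℚ) ≠ 0 := by
    intro h
    have h' : autCard lam = 0 := by exact_mod_cast h
    rw [h'] at hcc
    simp at hcc
    exact Nat.factorial_ne_zero n hcc.symm
  have hccQ : ((Finset.univ.filter fun α : Perm (Fin n) =>
      α.partition.parts = lam.parts).card : ℚ) *
      ((lam.parts.prod : ℕ) * autCard lam) = n ! := by exact_mod_cast hcc
  have hN : (n : ℚ) * hurwitzN n b lam (onePartPartition n hn) =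
      (Finset.univ.filter fun α : Perm (Fin n) => α.partition.parts = lam.parts).card *
        (b ! * (n : ℚ) ^ b * (lam.parts.prod : ℕ)) := by
    rw [HW.hurwitz_sum, Nat.cast_sum, Finset.mul_sum, ← nsmul_eq_mul, ← Finset.sum_const]
    refine Finset.sum_congr rfl fun α hα => ?_
    simp only [Finset.mem_filter, Finset.mem_univ, true_and] at hα
    have := HW.F_main b α (by rw [← HW.card_parts, hα, hb])
    rw [Fintype.card_fin, HW.P_eq, hα] at this
    exact this
  rw [hb, Nat.add_sub_cancel, show (((b + 1 : ℕ) : ℤ) - 2) = (b : ℤ) - 1 by push_cast; ring,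
    zpow_sub_one₀ hn0, zpow_natCast, div_eq_div_iff hnf haut]
  apply mul_left_cancel₀ hn0
  rw [← mul_assoc, hN, ← hccQ]
  field_simp
end

section
/- Let n ≥ 1 and let λ be a partition of n with parts λ_1, …, λ_ℓ. Then the genus-one one-part double Hurwitz number satisfies N(λ, (n); ℓ + 1) / n! = (ℓ + 1)! · n^{ℓ} · ((∑_{i=1}^{ℓ} λ_i²) − 1) / (24 · |Aut(λ)|). Equivalently, the number of tuples (α, τ_1, …, τ_{ℓ+1}), with α a permutation of {1, …, n} of cycle type λ and each τ_i a transposition such that τ_{ℓ+1} ⋯ τ_1 · α is an n-cycle, equals n! · (ℓ + 1)! · n^{ℓ} · ((∑_i λ_i²) − 1) / (24 · |Aut(λ)|). -/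
open Equiv Nat

namespace GOne

open Equiv.Perm

section Gen
variable {V : Type*} [Fintype V] [DecidableEq V]

/-- the cycle of `x` as a list starting at `x` -/
def cyc (a : Equiv.Perm V) (x : V) : List V := if a x = x then [x] else a.toList x

theorem cyc_nodup (a : Equiv.Perm V) (x : V) : (cyc a x).Nodup := by
  unfold cyc; split_ifs
  · simp
  · exact nodup_toList a x

theorem mem_cyc (a : Equiv.Perm V) (x y : V) : y ∈ cyc a x ↔ a.SameCycle x y := by
  unfold cyc; split_ifs with h
  · simp only [List.mem_singleton]
    constructor
    · rintro rfl; exact SameCycle.refl _ _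
    · intro hs
      obtain ⟨i, rfl⟩ := hs
      exact zpow_apply_eq_self_of_apply_eq_self h i
  · rw [mem_toList_iff]; simp [h]

theorem cyc_head (a : Equiv.Perm V) (x : V) : ∃ l, cyc a x = x :: l := by
  unfold cyc; split_ifs with h
  · exact ⟨[], rfl⟩
  · have hx : x ∈ a.support := by simpa using h
    have h1 := length_toList_pos_of_mem_support a x hx
    have h2 := toList_getElem_zero a x hx
    cases hl : a.toList x with
    | nil => simp [hl] at h1
    | cons z l => simp only [hl, List.getElem_cons_zero] at h2; exact ⟨l, by rw [h2]⟩

theorem formPerm_cyc (a : Equiv.Perm V) (x : V) : (cyc a x).formPerm = a.cycleOf x := by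
  unfold cyc; split_ifs with h
  · simp [(cycleOf_eq_one_iff a).2 h]
  · exact formPerm_toList a x

theorem formPerm_cyc_apply (a : Equiv.Perm V) (x z : V) (h : z ∈ cyc a x) :
    (cyc a x).formPerm z = a z := by
  rw [formPerm_cyc]
  exact SameCycle.cycleOf_apply ((mem_cyc a x z).1 h)

theorem apply_mem_cyc (a : Equiv.Perm V) (x z : V) (h : z ∈ cyc a x) : a z ∈ cyc a x := by
  rw [mem_cyc] at h ⊢
  exact sameCycle_apply_right.2 h

/-- length of cycle -/
def cl (a : Equiv.Perm V) (x : V) : ℕ := (cyc a x).length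

theorem cl_pos (a : Equiv.Perm V) (x : V) : 0 < cl a x := by
  obtain ⟨l, h⟩ := cyc_head a x
  simp [cl, h]

theorem cyc_toFinset (a : Equiv.Perm V) (x : V) :
    (cyc a x).toFinset = Finset.univ.filter (fun y => a.SameCycle x y) := by
  ext y; simp [mem_cyc]

theorem card_cyc (a : Equiv.Perm V) (x : V) :
    (Finset.univ.filter (fun y => a.SameCycle x y)).card = cl a x := by
  rw [← cyc_toFinset, List.toFinset_card_of_nodup (cyc_nodup a x)]; rfl

theorem cl_same (a : Equiv.Perm V) (x y : V) (h : a.SameCycle x y) : cl a x = cl a y := by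
  rw [← card_cyc, ← card_cyc]
  congr 1
  ext z
  simp only [Finset.mem_filter, Finset.mem_univ, true_and]
  exact ⟨fun k => h.symm.trans k, fun k => h.trans k⟩

theorem invself (F : Equiv.Perm V) (z : V) : F⁻¹ (F z) = z := F.symm_apply_apply z

theorem parts_formPerm_mul (l : List V) (hl : l.Nodup) (hne : l ≠ []) (R : Equiv.Perm V)
    (hR : ∀ z ∈ l, R z = z) :
    (l.formPerm * R).partition.parts + Multiset.replicate l.length 1
      = {l.length} + R.partition.parts := by
  by_cases h1 : 2 ≤ l.length
  · have hs : l.formPerm.support = l.toFinset := by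
      apply List.support_formPerm_of_nodup _ hl
      rintro x rfl
      simp at h1
    have hd : Equiv.Perm.Disjoint l.formPerm R := by
      intro z
      by_cases hz : z ∈ l
      · exact Or.inr (hR z hz)
      · exact Or.inl (List.formPerm_apply_of_notMem hz)
    have hct : l.formPerm.cycleType = {l.length} := by
      rw [(List.isCycle_formPerm hl h1).cycleType, hs, List.toFinset_card_of_nodup hl]
    have hc := hd.card_support_mul
    have hle : (l.formPerm * R).support.card ≤ Fintype.card V := Finset.card_le_univ _
    rw [hs, List.toFinset_card_of_nodup hl] at hc
    rw [parts_partition, parts_partition, hd.cycleType_mul, hct, add_assoc, add_assoc,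
      ← Multiset.replicate_add]
    congr 3
    omega
  · have : l.length = 1 := by
      have := List.length_pos_of_ne_nil hne
      omega
    obtain ⟨x, rfl⟩ := List.length_eq_one_iff.1 this
    simp [add_comm]

theorem swap_formPerm (x y : V) (l1 l2 : List V) (h : (x :: l1 ++ y :: l2).Nodup) :
    Equiv.swap x y * (x :: l1 ++ y :: l2).formPerm
      = (x :: l1).formPerm * (y :: l2).formPerm := by
  have A : ∀ (l1 : List V) (x : V), (x :: l1 ++ y :: l2).formPerm
      = (x :: l1 ++ [y]).formPerm * (y :: l2).formPerm := by
    intro l1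
    induction l1 with
    | nil => intro x; simp
    | cons z l1 ih =>
      intro x
      have := ih z
      simp only [List.cons_append, List.formPerm_cons_cons, mul_assoc] at this ⊢
      rw [this]
  have hn : (y :: x :: l1).Nodup := by
    have : (x :: l1 ++ [y]).Nodup := h.sublist (by simp)
    rw [List.nodup_append_comm] at this
    simpa using this
  have B : (x :: l1 ++ [y]).formPerm = Equiv.swap x y * (x :: l1).formPerm := by
    have := List.formPerm_rotate_one (y :: x :: l1) hn
    rw [List.formPerm_cons_cons, Equiv.swap_comm] at this
    rw [← this]; simp
  rw [A, B, ← mul_assoc, ← mul_assoc, Equiv.swap_mul_self, one_mul]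

/-- join -/
theorem parts_join (a : Equiv.Perm V) (x y : V) (h : ¬ a.SameCycle x y) :
    ∃ M : Multiset ℕ,
      a.partition.parts + Multiset.replicate (cl a x + cl a y) 1 = {cl a x} + {cl a y} + M ∧
      (Equiv.swap x y * a).partition.parts + Multiset.replicate (cl a x + cl a y) 1
        = {cl a x + cl a y} + M := by
  obtain ⟨lx, hx⟩ := cyc_head a x
  obtain ⟨ly, hy⟩ := cyc_head a y
  have hxy : ∀ z, z ∈ cyc a x → z ∈ cyc a y → False := by
    intro z h1 h2
    rw [mem_cyc] at h1 h2
    exact h (h1.trans h2.symm)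
  set Fx := (cyc a x).formPerm with hFx
  set Fy := (cyc a y).formPerm with hFy
  set R := Fy⁻¹ * (Fx⁻¹ * a) with hRdef
  have ha : a = Fx * (Fy * R) := by simp [hRdef]
  have fixx : ∀ z ∈ cyc a x, Fy z = z := fun z hz =>
    List.formPerm_apply_of_notMem (fun h' => hxy z hz h')
  have fixy : ∀ z ∈ cyc a y, Fx z = z := fun z hz =>
    List.formPerm_apply_of_notMem (fun h' => hxy z h' hz)
  have Rx : ∀ z ∈ cyc a x, R z = z := by
    intro z hz
    simp only [hRdef, Equiv.Perm.mul_apply]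
    rw [← formPerm_cyc_apply a x z hz, ← hFx, invself,
      Equiv.Perm.inv_eq_iff_eq, fixx z hz]
  have Ry : ∀ z ∈ cyc a y, R z = z := by
    intro z hz
    simp only [hRdef, Equiv.Perm.mul_apply]
    have : Fx⁻¹ (a z) = a z := by
      rw [Equiv.Perm.inv_eq_iff_eq, fixy _ (apply_mem_cyc a y z hz)]
    rw [this, ← formPerm_cyc_apply a y z hz, ← hFy, invself]
  refine ⟨R.partition.parts, ?_, ?_⟩
  · have h1 := parts_formPerm_mul (cyc a x) (cyc_nodup a x) (by simp [hx]) (Fy * R)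
      (fun z hz => by rw [Equiv.Perm.mul_apply, Rx z hz, fixx z hz])
    have h2 := parts_formPerm_mul (cyc a y) (cyc_nodup a y) (by simp [hy]) R Ry
    rw [← hFx, ← ha] at h1
    rw [← hFy] at h2
    unfold cl
    rw [Multiset.replicate_add, ← add_assoc, h1, add_assoc, h2, add_assoc]
  · have hnd : (cyc a x ++ cyc a y).Nodup :=
      List.nodup_append'.2 ⟨cyc_nodup a x, cyc_nodup a y, fun z h1 h2 => hxy z h1 h2⟩
    have h1 := parts_formPerm_mul (cyc a x ++ cyc a y) hnd (by simp [hx]) R (by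
      intro z hz
      rcases List.mem_append.1 hz with hz | hz
      · exact Rx z hz
      · exact Ry z hz)
    have h3 : Equiv.swap x y * a = (cyc a x ++ cyc a y).formPerm * R := by
      have := swap_formPerm x y lx ly (by rw [← hx, ← hy]; exact hnd)
      rw [← hx, ← hy, ← hFx, ← hFy] at this
      conv_lhs => rw [ha, ← mul_assoc Fx, ← this]
      simp [← mul_assoc]
    rw [h3]
    simpa [cl] using h1

/-- cut -/
theorem parts_cut (a : Equiv.Perm V) (x y : V) (l1 l2 : List V)
    (h : cyc a x = x :: l1 ++ y :: l2) :
    ∃ M : Multiset ℕ,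
      a.partition.parts + Multiset.replicate (cl a x) 1 = {cl a x} + M ∧
      (Equiv.swap x y * a).partition.parts + Multiset.replicate (cl a x) 1
        = {l1.length + 1} + {l2.length + 1} + M := by
  set Fx := (cyc a x).formPerm with hFx
  set R := Fx⁻¹ * a with hRdef
  have ha : a = Fx * R := by simp [hRdef]
  have Rx : ∀ z ∈ cyc a x, R z = z := by
    intro z hz
    simp only [hRdef, Equiv.Perm.mul_apply]
    rw [← formPerm_cyc_apply a x z hz, ← hFx, invself]
  have hnd := cyc_nodup a x
  have hnd' := hnd
  rw [h, List.nodup_append'] at hnd'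
  obtain ⟨n1, n2, n3⟩ := hnd'
  refine ⟨R.partition.parts, ?_, ?_⟩
  · have h1 := parts_formPerm_mul (cyc a x) hnd (by simp [h]) R Rx
    rw [← hFx, ← ha] at h1
    exact h1
  · have h1 := parts_formPerm_mul (x :: l1) n1 (by simp) ((y :: l2).formPerm * R) (by
      intro z hz
      rw [Equiv.Perm.mul_apply, Rx z (by rw [h]; exact List.mem_append_left _ hz)]
      exact List.formPerm_apply_of_notMem (fun h' => n3 hz h'))
    have h2 := parts_formPerm_mul (y :: l2) n2 (by simp) R (by
      intro z hz
      exact Rx z (by rw [h]; exact List.mem_append_right _ hz))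
    have h3 : Equiv.swap x y * a = (x :: l1).formPerm * ((y :: l2).formPerm * R) := by
      have := swap_formPerm x y l1 l2 (by rw [← h]; exact hnd)
      rw [← mul_assoc, ← this, ← h, ← hFx, mul_assoc, ← ha]
    rw [h3]
    have hl : cl a x = (x :: l1).length + (y :: l2).length := by simp [cl, h]; omega
    rw [hl, Multiset.replicate_add, ← add_assoc, h1, add_assoc, h2, add_assoc]
    simp

theorem sum_cl (a : Equiv.Perm V) (f : ℕ → ℚ) :
    ∑ x, f (cl a x) = (a.partition.parts.map (fun m : ℕ => (m : ℚ) * f m)).sum := by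
  rw [parts_partition, Multiset.map_add, Multiset.sum_add, Multiset.map_replicate,
    Multiset.sum_replicate, cycleType_def, Multiset.map_map]
  rw [← Finset.sum_add_sum_compl a.support]
  congr 1
  · have hm : ∀ x ∈ a.support, a.cycleOf x ∈ a.cycleFactorsFinset := fun x hx =>
      cycleOf_mem_cycleFactorsFinset_iff.2 hx
    rw [← Finset.sum_fiberwise_of_maps_to hm]
    change _ = ∑ c ∈ a.cycleFactorsFinset, _
    apply Finset.sum_congr rfl
    intro c hc
    have hfil : a.support.filter (fun x => a.cycleOf x = c) = c.support := by
      ext x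
      simp only [Finset.mem_filter]
      constructor
      · rintro ⟨h1, rfl⟩
        rw [mem_support_cycleOf_iff]
        exact ⟨SameCycle.refl _ _, h1⟩
      · intro hx
        have := (eq_cycleOf_of_mem_cycleFactorsFinset_iff a c hc x).2 hx
        exact ⟨mem_cycleFactorsFinset_support_le hc hx, this.symm⟩
    rw [hfil]
    have : ∀ x ∈ c.support, f (cl a x) = f c.support.card := by
      intro x hx
      have h1 := (eq_cycleOf_of_mem_cycleFactorsFinset_iff a c hc x).2 hx
      have h2 : a x ≠ x := by simpa using mem_cycleFactorsFinset_support_le hc hx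
      rw [h1]
      unfold cl cyc
      rw [if_neg h2, length_toList]
    rw [Finset.sum_congr rfl this]
    simp
  · have : ∀ x ∈ a.supportᶜ, f (cl a x) = f 1 := by
      intro x hx
      have h2 : a x = x := by simpa using hx
      unfold cl cyc
      rw [if_pos h2]; rfl
    rw [Finset.sum_congr rfl this]
    simp [Finset.card_compl]

end Gen

section Inv
variable {V : Type*} [Fintype V] [DecidableEq V]

/-- number of cycles -/
def nc (a : Equiv.Perm V) : ℕ := Multiset.card a.partition.parts
/-- product of the parts -/
def PP (a : Equiv.Perm V) : ℚ := (a.partition.parts.map (fun m : ℕ => (m : ℚ))).prod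
/-- sum of squares of the parts -/
def q2 (a : Equiv.Perm V) : ℚ := (a.partition.parts.map (fun m : ℕ => (m : ℚ) ^ 2)).sum
/-- sum of cubes of the parts -/
def q3 (a : Equiv.Perm V) : ℚ := ∑ x, (cl a x : ℚ) ^ 2

theorem clQ_ne (a : Equiv.Perm V) (x : V) : (cl a x : ℚ) ≠ 0 := by
  have := cl_pos a x
  positivity

theorem join_inv (a : Equiv.Perm V) (x y : V) (h : ¬ a.SameCycle x y) :
    nc a = nc (Equiv.swap x y * a) + 1 ∧
    PP (Equiv.swap x y * a) = PP a * ((cl a x : ℚ)⁻¹ + (cl a y : ℚ)⁻¹) ∧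
    q2 (Equiv.swap x y * a) = q2 a + 2 * cl a x * cl a y := by
  obtain ⟨M, h1, h2⟩ := parts_join a x y h
  have hx := clQ_ne a x
  have hy := clQ_ne a y
  refine ⟨?_, ?_, ?_⟩
  · have e1 := congrArg Multiset.card h1
    have e2 := congrArg Multiset.card h2
    simp at e1 e2
    unfold nc
    omega
  · have e1 := congrArg (fun s => (Multiset.map (fun m : ℕ => (m : ℚ)) s).prod) h1
    have e2 := congrArg (fun s => (Multiset.map (fun m : ℕ => (m : ℚ)) s).prod) h2
    simp only [Multiset.map_add, Multiset.prod_add, Multiset.map_replicate,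
      Multiset.prod_replicate, Multiset.map_singleton, Multiset.prod_singleton, Nat.cast_one,
      one_pow, mul_one, Nat.cast_add] at e1 e2
    unfold PP
    rw [e1, e2]
    field_simp
    ring
  · have e1 := congrArg (fun s => (Multiset.map (fun m : ℕ => (m : ℚ) ^ 2) s).sum) h1
    have e2 := congrArg (fun s => (Multiset.map (fun m : ℕ => (m : ℚ) ^ 2) s).sum) h2
    simp only [Multiset.map_add, Multiset.sum_add, Multiset.map_replicate,
      Multiset.sum_replicate, Multiset.map_singleton, Multiset.sum_singleton, Nat.cast_one,
      one_pow, Nat.cast_add] at e1 e2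
    unfold q2
    linear_combination e2 - e1

theorem cut_inv (a : Equiv.Perm V) (x y : V) (l1 l2 : List V)
    (h : cyc a x = x :: l1 ++ y :: l2) :
    nc (Equiv.swap x y * a) = nc a + 1 ∧
    PP (Equiv.swap x y * a)
      = PP a * (cl a x : ℚ)⁻¹ * ((l1.length + 1 : ℚ) * (l2.length + 1)) := by
  obtain ⟨M, h1, h2⟩ := parts_cut a x y l1 l2 h
  have hx := clQ_ne a x
  refine ⟨?_, ?_⟩
  · have e1 := congrArg Multiset.card h1
    have e2 := congrArg Multiset.card h2
    simp at e1 e2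
    unfold nc
    omega
  · have e1 := congrArg (fun s => (Multiset.map (fun m : ℕ => (m : ℚ)) s).prod) h1
    have e2 := congrArg (fun s => (Multiset.map (fun m : ℕ => (m : ℚ)) s).prod) h2
    simp only [Multiset.map_add, Multiset.prod_add, Multiset.map_replicate,
      Multiset.prod_replicate, Multiset.map_singleton, Multiset.prod_singleton, Nat.cast_one,
      one_pow, mul_one, Nat.cast_add] at e1 e2
    unfold PP
    rw [e1, e2]
    field_simp

theorem cut_nc (a : Equiv.Perm V) (x y : V) (h : a.SameCycle x y) (hxy : x ≠ y) :
    nc (Equiv.swap x y * a) = nc a + 1 := by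
  obtain ⟨l, hl⟩ := cyc_head a x
  have hy : y ∈ cyc a x := (mem_cyc a x y).2 h
  rw [hl] at hy
  have hy' : y ∈ l := by
    rcases List.mem_cons.1 hy with h' | h'
    · exact absurd h'.symm hxy
    · exact h'
  obtain ⟨l1, l2, rfl⟩ := List.append_of_mem hy'
  exact (cut_inv a x y l1 l2 (by rw [hl]; rfl)).1

theorem list_sum_split {W : Type*} (l : List W) (F : W → ℚ) (g : ℕ → ℚ)
    (h : ∀ l1 y l2, l = l1 ++ y :: l2 → F y = g l1.length) :
    (l.map F).sum = ∑ i ∈ Finset.range l.length, g i := by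
  induction l generalizing g with
  | nil => simp
  | cons z l ih =>
    rw [List.map_cons, List.sum_cons, List.length_cons, Finset.sum_range_succ',
      ih (fun i => g (i + 1)) (fun l1 y l2 e => h (z :: l1) y l2 (by rw [e]; rfl)),
      h [] z l rfl]
    simp [add_comm]

theorem sum_aux (L : ℚ) (k : ℕ) : ∑ i ∈ Finset.range k, ((i : ℚ) + 1) * (L - i)
    = L * k * (k - 1) / 2 - (k - 1) * k * (2 * k - 1) / 6 + L * k - k * (k - 1) / 2 := by
  induction k with
  | zero => simp
  | succ k ih => rw [Finset.sum_range_succ, ih]; push_cast; ring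

theorem cut_sum (a : Equiv.Perm V) (x : V) :
    ∑ y, (if a.SameCycle x y ∧ x ≠ y then PP (Equiv.swap x y * a) else 0)
      = PP a * (((cl a x : ℚ) ^ 2 - 1) / 6) := by
  obtain ⟨l, hl⟩ := cyc_head a x
  have hnd := cyc_nodup a x
  rw [hl, List.nodup_cons] at hnd
  have hf : Finset.univ.filter (fun y => a.SameCycle x y ∧ x ≠ y) = l.toFinset := by
    ext y
    simp only [Finset.mem_filter, Finset.mem_univ, true_and, ← mem_cyc, hl, List.mem_cons,
      List.mem_toFinset]
    constructor
    · rintro ⟨rfl | h, h'⟩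
      · exact absurd rfl h'
      · exact h
    · intro h
      exact ⟨Or.inr h, fun e => hnd.1 (e ▸ h)⟩
  rw [← Finset.sum_filter, hf, List.sum_toFinset _ hnd.2]
  have hc : (cl a x : ℚ) = l.length + 1 := by simp [cl, hl]
  rw [list_sum_split l _ (fun i => PP a * (cl a x : ℚ)⁻¹ * (((i : ℚ) + 1) * (l.length - i)))]
  · rw [← Finset.mul_sum, sum_aux, hc]
    have : (l.length + 1 : ℚ) ≠ 0 := by positivity
    field_simp
    ring
  · intro l1 y l2 e
    rw [(cut_inv a x y l1 l2 (by rw [hl, e]; rfl)).2]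
    have : (l.length : ℚ) = l1.length + (l2.length + 1) := by rw [e]; simp
    rw [this]; ring

theorem sum_cl_self (a : Equiv.Perm V) : ∑ x, (cl a x : ℚ) = q2 a := by
  rw [sum_cl a (fun m => (m : ℚ))]
  unfold q2
  simp only [sq]

theorem sum_cl_inv (a : Equiv.Perm V) : ∑ x, (cl a x : ℚ)⁻¹ = nc a := by
  rw [sum_cl a (fun m => (m : ℚ)⁻¹)]
  have : a.partition.parts.map (fun m : ℕ => (m : ℚ) * (m : ℚ)⁻¹)
      = a.partition.parts.map (fun _ => (1 : ℚ)) := by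
    apply Multiset.map_congr rfl
    intro m hm
    have := a.partition.parts_pos hm
    exact mul_inv_cancel₀ (by positivity)
  rw [this]
  simp [nc]

theorem join_sum (a : Equiv.Perm V) (E B : ℚ) :
    ∑ x, ∑ y, (if ¬ a.SameCycle x y then
      ((cl a x : ℚ)⁻¹ + (cl a y : ℚ)⁻¹) * (E + 2 * B * cl a x * cl a y) else 0)
    = 2 * Fintype.card V * (nc a - 1) * E + 4 * B * (Fintype.card V * q2 a - q3 a) := by
  have h1 : ∀ x y : V, (if ¬ a.SameCycle x y then
      ((cl a x : ℚ)⁻¹ + (cl a y : ℚ)⁻¹) * (E + 2 * B * cl a x * cl a y) else 0)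
      = ((cl a x : ℚ)⁻¹ * E + (cl a y : ℚ)⁻¹ * E + 2 * B * cl a x + 2 * B * cl a y)
        - (if a.SameCycle x y then 2 * (cl a x : ℚ)⁻¹ * E + 4 * B * cl a x else 0) := by
    intro x y
    have hx := clQ_ne a x
    have hy := clQ_ne a y
    by_cases h : a.SameCycle x y
    · simp only [h, not_true_eq_false, if_false, if_true, ← cl_same a x y h]; ring
    · simp only [h, not_false_eq_true, if_false, if_true]
      field_simp
      ring
  have h2 : ∀ x : V, ∑ y, (if a.SameCycle x y then 2 * (cl a x : ℚ)⁻¹ * E + 4 * B * cl a x else 0)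
      = 2 * E + 4 * B * (cl a x : ℚ) ^ 2 := by
    intro x
    have hx := clQ_ne a x
    rw [← Finset.sum_filter, Finset.sum_const, card_cyc, nsmul_eq_mul]
    field_simp
  simp only [h1, Finset.sum_sub_distrib, h2, Finset.sum_add_distrib, ← Finset.mul_sum,
    ← Finset.sum_mul, sum_cl_self, sum_cl_inv, Finset.sum_const, Finset.card_univ, nsmul_eq_mul]
  unfold q3
  ring

theorem step_sum (a : Equiv.Perm V) (H : Equiv.Perm V → ℚ) (A B K : ℚ)
    (hj : ∀ x y, ¬ a.SameCycle x y → H (Equiv.swap x y * a)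
      = PP (Equiv.swap x y * a) * (A + B * q2 (Equiv.swap x y * a)))
    (hc : ∀ x y, a.SameCycle x y → x ≠ y → H (Equiv.swap x y * a)
      = K * PP (Equiv.swap x y * a)) :
    (1 / 2 : ℚ) * ∑ x, ∑ y, (if x ≠ y then H (Equiv.swap x y * a) else 0)
      = PP a * (Fintype.card V * (nc a - 1) * (A + B * q2 a)
        + 2 * B * (Fintype.card V * q2 a - q3 a) + K * (q3 a - Fintype.card V) / 12) := by
  have h1 : ∀ x y : V, (if x ≠ y then H (Equiv.swap x y * a) else 0)
      = PP a * (if ¬ a.SameCycle x y then ((cl a x : ℚ)⁻¹ + (cl a y : ℚ)⁻¹) *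
          ((A + B * q2 a) + 2 * B * cl a x * cl a y) else 0)
        + K * (if a.SameCycle x y ∧ x ≠ y then PP (Equiv.swap x y * a) else 0) := by
    intro x y
    by_cases h : a.SameCycle x y
    · by_cases hxy : x = y
      · simp [hxy, SameCycle.refl]
      · simp [h, hxy, hc x y h hxy]
    · have hxy : x ≠ y := by rintro rfl; exact h (SameCycle.refl _ _)
      obtain ⟨_, e1, e2⟩ := join_inv a x y h
      rw [if_pos hxy, if_pos h, if_neg (by tauto), hj x y h, e1, e2]
      ring
  simp only [h1, Finset.sum_add_distrib, ← Finset.mul_sum, cut_sum, join_sum]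
  rw [← Finset.sum_div, Finset.sum_sub_distrib]
  simp only [Finset.sum_const, Finset.card_univ, nsmul_eq_mul]
  change 1 / 2 * (_ + K * (PP a * ((q3 a - _) / 6))) = _
  ring

/-- weighted count of transposition sequences -/
noncomputable def G : ℕ → Equiv.Perm V → ℚ
  | 0, a => if a.partition.parts = {Fintype.card V} then 1 else 0
  | b + 1, a => (1 / 2 : ℚ) * ∑ x, ∑ y, (if x ≠ y then G b (Equiv.swap x y * a) else 0)

theorem nc_swap_ge (a : Equiv.Perm V) (x y : V) (h : x ≠ y) :
    nc a ≤ nc (Equiv.swap x y * a) + 1 := by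
  by_cases hs : a.SameCycle x y
  · have := cut_nc a x y hs h
    omega
  · exact (join_inv a x y hs).1.le

theorem G_zero (b : ℕ) (a : Equiv.Perm V) (h : b + 1 < nc a) : G b a = 0 := by
  induction b generalizing a with
  | zero =>
    unfold G
    rw [if_neg]
    intro e
    simp [nc, e] at h
  | succ b ih =>
    unfold G
    rw [Finset.sum_eq_zero, mul_zero]
    intro x _
    apply Finset.sum_eq_zero
    intro y _
    split_ifs with hxy
    · apply ih
      have := nc_swap_ge a x y hxy
      omega
    · rfl

theorem G_genus_zero (b : ℕ) (a : Equiv.Perm V) (h : nc a = b + 1) :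
    (Fintype.card V : ℚ) * G b a = (b ! : ℚ) * (Fintype.card V : ℚ) ^ b * PP a := by
  induction b generalizing a with
  | zero =>
    obtain ⟨m, hm⟩ := Multiset.card_eq_one.1 h
    have hs := a.partition.parts_sum
    rw [hm, Multiset.sum_singleton] at hs
    unfold G PP
    rw [hm, hs]
    simp
  | succ b ih =>
    by_cases hn : (Fintype.card V : ℚ) = 0
    · rw [hn]; simp
    have := step_sum a (G b) ((b ! : ℚ) * (Fintype.card V : ℚ) ^ b / Fintype.card V) 0 0
      (fun x y hs => by
        have h1 := (join_inv a x y hs).1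
        have := ih (Equiv.swap x y * a) (by omega)
        field_simp
        linear_combination this)
      (fun x y hs hxy => by
        rw [G_zero, zero_mul]
        have := cut_nc a x y hs hxy
        omega)
    rw [G, this, h, Nat.factorial_succ]
    push_cast
    field_simp
    ring

theorem G_genus_one (hV : 1 ≤ Fintype.card V) (m : ℕ) (a : Equiv.Perm V) (h : nc a = m) :
    G (m + 1) a = ((m + 1)! : ℚ) * (Fintype.card V : ℚ) ^ m * PP a * (q2 a - 1) / 24 := by
  induction m generalizing a with
  | zero =>
    exfalso
    have hs := a.partition.parts_sum
    rw [Multiset.card_eq_zero.1 h] at hs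
    simp at hs
    omega
  | succ m ih =>
    have hn : (Fintype.card V : ℚ) ≠ 0 := by positivity
    have := step_sum a (G (m + 1)) (-(((m + 1)! : ℚ) * (Fintype.card V : ℚ) ^ m / 24))
      (((m + 1)! : ℚ) * (Fintype.card V : ℚ) ^ m / 24)
      (((m + 1)! : ℚ) * (Fintype.card V : ℚ) ^ m)
      (fun x y hs => by
        have h1 := (join_inv a x y hs).1
        rw [ih (Equiv.swap x y * a) (by omega)]
        ring)
      (fun x y hs hxy => by
        have h1 := cut_nc a x y hs hxy
        have := G_genus_zero (m + 1) (Equiv.swap x y * a) (by omega)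
        apply mul_left_cancel₀ hn
        rw [this]; ring)
    rw [G, this, h, Nat.factorial_succ (m + 1)]
    push_cast
    ring

end Inv

section Cnt
variable {V : Type*} [Fintype V] [DecidableEq V]

open scoped Classical in
theorem sum_swaps (h : Equiv.Perm V → ℚ) :
    ∑ t : Equiv.Perm V, (if t.IsSwap then h t else 0)
      = (1 / 2 : ℚ) * ∑ x, ∑ y, (if x ≠ y then h (Equiv.swap x y) else 0) := by
  have e1 : ∑ x : V, ∑ y : V, (if x ≠ y then h (Equiv.swap x y) else 0)
      = ∑ t : Equiv.Perm V, ∑ p : V × V, (if p.1 ≠ p.2 ∧ Equiv.swap p.1 p.2 = t then h t else 0) := by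
    conv_rhs => rw [Finset.sum_comm, Fintype.sum_prod_type]
    refine Finset.sum_congr rfl fun x _ => Finset.sum_congr rfl fun y _ => ?_
    by_cases hxy : x = y
    · simp [hxy]
    · simp [hxy]
  rw [e1, Finset.mul_sum]
  refine Finset.sum_congr rfl fun t _ => ?_
  split_ifs with ht
  · obtain ⟨a, b, hab, rfl⟩ := ht
    rw [← Finset.sum_filter, Finset.sum_const]
    have : Finset.univ.filter (fun p : V × V => p.1 ≠ p.2 ∧ Equiv.swap p.1 p.2 = Equiv.swap a b)
        = {(a, b), (b, a)} := by
      ext ⟨x, y⟩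
      simp only [Finset.mem_filter, Finset.mem_univ, true_and, Finset.mem_insert,
        Finset.mem_singleton, Prod.mk.injEq]
      constructor
      · rintro ⟨hxy, e⟩
        have hx := congrArg (fun f => f x) e
        have hy := congrArg (fun f => f y) e
        simp only [Equiv.swap_apply_left, Equiv.swap_apply_right] at hx hy
        by_cases hxa : x = a
        · subst hxa
          simp only [Equiv.swap_apply_left] at hx
          exact Or.inl ⟨rfl, hx⟩
        · by_cases hxb : x = b
          · subst hxb
            simp only [Equiv.swap_apply_right] at hx
            exact Or.inr ⟨rfl, hx⟩
          · rw [Equiv.swap_apply_of_ne_of_ne hxa hxb] at hx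
            exact absurd hx.symm hxy
      · rintro (⟨rfl, rfl⟩ | ⟨rfl, rfl⟩)
        · exact ⟨hab, rfl⟩
        · exact ⟨hab.symm, Equiv.swap_comm _ _⟩
    rw [this, Finset.card_pair (by simp [hab])]
    simp
  · rw [Finset.sum_eq_zero, mul_zero]
    intro p _
    rw [if_neg]
    rintro ⟨h1, rfl⟩
    exact ht ⟨_, _, h1, rfl⟩

open scoped Classical in
theorem G_count (b : ℕ) (a : Equiv.Perm V) :
    ∑ t : Fin b → Equiv.Perm V, (if (∀ i, (t i).IsSwap) ∧
      ((List.ofFn t).reverse.prod * a).partition.parts = {Fintype.card V} then (1 : ℚ) else 0)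
    = G b a := by
  induction b generalizing a with
  | zero => simp [G]
  | succ b ih =>
    rw [G, ← (Fin.consEquiv (fun _ : Fin (b + 1) => Equiv.Perm V)).sum_comp,
      Fintype.sum_prod_type, ← sum_swaps (fun t => G b (t * a))]
    refine Finset.sum_congr rfl fun t _ => ?_
    rw [← ih]
    simp only [Fin.consEquiv_apply, Fin.forall_fin_succ, Fin.cons_zero, Fin.cons_succ,
      List.ofFn_succ, List.reverse_cons, List.prod_append, List.prod_singleton, mul_assoc]
    by_cases ht : t.IsSwap
    · simp [ht]
    · simp [ht]

end Cnt

theorem class_card (n : ℕ) (lam : Nat.Partition n) :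
    (Finset.univ.filter (fun a : Equiv.Perm (Fin n) => a.partition.parts = lam.parts)).card
      * (lam.parts.prod * autCard lam) = n ! := by
  set m := lam.parts.filter (fun k => 2 ≤ k) with hm
  set k := lam.parts.count 1 with hk
  have hsplit : lam.parts = m + Multiset.replicate k 1 := by
    have h1 := Multiset.filter_add_not (fun k => 2 ≤ k) lam.parts
    have h2 : lam.parts.filter (fun k => ¬ 2 ≤ k) = Multiset.replicate k 1 := by
      rw [hk, ← Multiset.filter_eq']
      apply Multiset.filter_congr
      intro x hx
      have := lam.parts_pos hx
      omega
    rw [h2] at h1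
    exact h1.symm
  have hsum : m.sum + k = n := by
    have := lam.parts_sum
    rw [hsplit] at this
    simpa using this
  have h2m : ∀ x ∈ m, 2 ≤ x := fun x hx => (Multiset.mem_filter.1 hx).2
  have hfil : Finset.univ.filter (fun a : Equiv.Perm (Fin n) => a.partition.parts = lam.parts)
      = Finset.univ.filter (fun a : Equiv.Perm (Fin n) => a.cycleType = m) := by
    ext a
    simp only [Finset.mem_filter, Finset.mem_univ, true_and]
    constructor
    · intro h
      rw [← filter_parts_partition_eq_cycleType, h]
    · intro h
      rw [parts_partition, ← sum_cycleType, h, hsplit, Fintype.card_fin]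
      congr 2
      omega
  have hc := card_of_cycleType_mul_eq (Fin n) m
  rw [if_pos ⟨by rw [Fintype.card_fin]; omega, h2m⟩, Fintype.card_fin] at hc
  rw [hfil]
  convert hc using 2
  have hnk : n - m.sum = k := by omega
  have hprod : lam.parts.prod = m.prod := by rw [hsplit]; simp
  have h1m : 1 ∉ m := fun h => by have := h2m 1 h; omega
  have haut : autCard lam = k ! * ∏ x ∈ m.toFinset, (m.count x)! := by
    unfold autCard
    have hsub : lam.parts.toFinset ⊆ insert 1 m.toFinset := by
      intro x hx
      rw [Multiset.mem_toFinset, hsplit, Multiset.mem_add] at hx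
      rcases hx with hx | hx
      · simp [hx]
      · simp [Multiset.eq_of_mem_replicate hx]
    rw [Finset.prod_subset hsub, Finset.prod_insert (by simpa using h1m)]
    · congr 1
      apply Finset.prod_congr rfl
      intro x hx
      have hx1 : x ≠ 1 := by
        rintro rfl
        exact h1m (by simpa using hx)
      rw [hsplit, Multiset.count_add, Multiset.count_replicate, if_neg (Ne.symm hx1), add_zero]
    · intro x _ hx
      rw [Multiset.mem_toFinset] at hx
      rw [Multiset.count_eq_zero.2 hx, Nat.factorial_zero]
  rw [hnk, hprod, haut]
  ring

open scoped Classical in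
theorem hurwitzN_eq (n : ℕ) (hn : 1 ≤ n) (b : ℕ) (lam : Nat.Partition n) :
    (hurwitzN n b lam (onePartPartition n hn) : ℚ)
      = ∑ a : Equiv.Perm (Fin n), if a.partition.parts = lam.parts then G b a else 0 := by
  unfold hurwitzN
  rw [Nat.card_eq_fintype_card, Fintype.card_subtype, Finset.card_filter, Nat.cast_sum,
    Fintype.sum_prod_type]
  refine Finset.sum_congr rfl fun a _ => ?_
  split_ifs with h
  · rw [← G_count]
    refine Finset.sum_congr rfl fun t _ => ?_
    simp [h, onePartPartition]
  · simp [h]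

end GOne

/-- The genus-one one-part double Hurwitz number:
`N(λ, (n); ℓ+1) / n! = (ℓ+1)! ⋅ n^ℓ ⋅ ((∑ᵢ λᵢ²) − 1) / (24 ⋅ |Aut(λ)|)`. -/
theorem genus_one_one_part_double_hurwitz (n : ℕ) (hn : 1 ≤ n) (lam : Nat.Partition n) :
    (hurwitzN n (Multiset.card lam.parts + 1) lam (onePartPartition n hn) : ℚ) / n ! =
      ((Multiset.card lam.parts + 1)! : ℚ) * (n : ℚ) ^ Multiset.card lam.parts *
        ((((lam.parts.map fun m => m ^ 2).sum : ℕ) : ℚ) - 1) / (24 * autCard lam) := by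
  classical
  rw [GOne.hurwitzN_eq]
  set l := Multiset.card lam.parts with hl
  have hval : ∀ a : Equiv.Perm (Fin n), (if a.partition.parts = lam.parts then
      GOne.G (l + 1) a else 0) = (if a.partition.parts = lam.parts then
      (((l + 1)! : ℚ) * (n : ℚ) ^ l * (lam.parts.prod : ℚ) *
        ((((lam.parts.map fun m => m ^ 2).sum : ℕ) : ℚ) - 1) / 24) else 0) := by
    intro a
    split_ifs with h
    · rw [GOne.G_genus_one (by simpa using hn) l a (by rw [GOne.nc, h])]
      rw [GOne.PP, GOne.q2, h, Fintype.card_fin, Nat.cast_multiset_prod, Nat.cast_multiset_sum,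
        Multiset.map_map]
      simp
    · rfl
  rw [Finset.sum_congr rfl (fun a _ => hval a), ← Finset.sum_filter, Finset.sum_const,
    nsmul_eq_mul]
  have hc := GOne.class_card n lam
  have hf : (n ! : ℚ) ≠ 0 := by exact_mod_cast Nat.factorial_ne_zero n
  have haut : (autCard lam : ℚ) ≠ 0 := by
    intro h0
    have h0' : autCard lam = 0 := by exact_mod_cast h0
    rw [h0'] at hc
    simp at hc
    exact Nat.factorial_ne_zero n hc.symm
  have hcq : ((Finset.univ.filter (fun a : Equiv.Perm (Fin n) =>
      a.partition.parts = lam.parts)).card : ℚ) * ((lam.parts.prod : ℚ) * autCard lam) = n ! := by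
    exact_mod_cast hc
  rw [div_eq_div_iff hf (by positivity), ← hcq]
  ring
end

section
/- Let n ≥ 1 and let σ be a fixed n-cycle in the symmetric group on {1, …, n}. Then the number of (n−1)-tuples (τ_1, …, τ_{n−1}) of transpositions with τ_{n−1} ⋯ τ_1 = σ equals n^{n−2}. Equivalently, the genus-zero one-part double Hurwitz number for the trivial partition satisfies H^0_{(1^n),(n)} = n^{n−3}, i.e. N((1^n), (n); n−1) = (n−1)! · n^{n−2}. -/
open Equiv Nat

/-- The partition `(1^n)` of `n`, with `n` parts all equal to `1`. -/
def trivialPartition (n : ℕ) : Nat.Partition n :=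
  ⟨Multiset.replicate n 1, fun hi => by
      have := Multiset.eq_of_mem_replicate hi; omega, by simp⟩


namespace CycFact

theorem rel_of_sameCycle {α : Type*} [Finite α] {f : Perm α} {R : α → α → Prop} (hR : Equivalence R)
    (h : ∀ a, R a (f a)) {a b : α} (hab : f.SameCycle a b) : R a b := by
  obtain ⟨i, -, rfl⟩ := hab.exists_pow_eq'
  clear hab
  induction i with
  | zero => exact hR.refl _
  | succ k ih =>
    rw [_root_.pow_succ']
    exact hR.trans ih (h _)

theorem sameCycle_equiv {α : Type*} (f : Perm α) : Equivalence f.SameCycle :=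
  ⟨fun a => Perm.SameCycle.refl f a, fun h => h.symm, fun h h' => h.trans h'⟩

theorem sameCycle_apply {α : Type*} (f : Perm α) (a : α) : f.SameCycle a (f a) := ⟨1, by simp⟩

theorem split_le {α : Type*} [Finite α] [DecidableEq α] {f : Perm α} {x y a b : α}
    (h : f.SameCycle x y) (hab : (swap x y * f).SameCycle a b) : f.SameCycle a b := by
  refine rel_of_sameCycle (sameCycle_equiv f) (fun a => ?_) hab
  have h1 := sameCycle_apply f a
  rw [Perm.mul_apply]
  rcases eq_or_ne (f a) x with hx | hx
  · rw [hx, swap_apply_left]; rw [hx] at h1; exact h1.trans h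
  rcases eq_or_ne (f a) y with hy | hy
  · rw [hy, swap_apply_right]; rw [hy] at h1; exact h1.trans h.symm
  rwa [swap_apply_of_ne_of_ne hx hy]

theorem merge_xy {α : Type*} [Finite α] [DecidableEq α] {f : Perm α} {x y : α}
    (h : ¬ f.SameCycle x y) : (swap x y * f).SameCycle x y := by
  have key : ∀ j : ℕ, (swap x y * f).SameCycle x ((f ^ j) x) := by
    intro j
    induction j with
    | zero => exact Perm.SameCycle.refl _ _
    | succ k ih =>
      rw [_root_.pow_succ', Perm.mul_apply]
      set z := (f ^ k) x with hz
      have hfz : f.SameCycle x (f z) := ⟨k + 1, by rw [hz, ← Perm.mul_apply, ← _root_.pow_succ']; norm_cast⟩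
      rcases eq_or_ne (f z) x with hx | hx
      · rw [hx]
      rcases eq_or_ne (f z) y with hy | hy
      · rw [hy] at hfz; exact absurd hfz h
      have := sameCycle_apply (swap x y * f) z
      rw [Perm.mul_apply, swap_apply_of_ne_of_ne hx hy] at this
      exact ih.trans this
  have h1 : f.SameCycle x (f⁻¹ x) := ⟨-1, by simp⟩
  obtain ⟨i, -, hi⟩ := h1.exists_pow_eq'
  have h2 := key i
  rw [hi] at h2
  have := sameCycle_apply (swap x y * f) (f⁻¹ x)
  have h3 : f (f⁻¹ x) = x := by simp
  rw [Perm.mul_apply, h3, swap_apply_left] at this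
  exact h2.trans this

theorem merge_ge {α : Type*} [Finite α] [DecidableEq α] {f : Perm α} {x y a b : α}
    (h : ¬ f.SameCycle x y) (hab : f.SameCycle a b) : (swap x y * f).SameCycle a b := by
  have := split_le (f := swap x y * f) (x := x) (y := y) (a := a) (b := b) (merge_xy h)
  apply this
  rwa [← mul_assoc, swap_mul_self, one_mul]

theorem merge_iff {α : Type*} [Finite α] [DecidableEq α] {f : Perm α} {x y : α}
    (h : ¬ f.SameCycle x y) (a b : α) : (swap x y * f).SameCycle a b ↔
      f.SameCycle a b ∨ ((f.SameCycle x a ∨ f.SameCycle y a) ∧ (f.SameCycle x b ∨ f.SameCycle y b)) := by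
  constructor
  · intro hab
    refine rel_of_sameCycle (f := swap x y * f) (R := fun a b => f.SameCycle a b ∨
      ((f.SameCycle x a ∨ f.SameCycle y a) ∧ (f.SameCycle x b ∨ f.SameCycle y b))) ⟨?_, ?_, ?_⟩ ?_ hab
    · intro a; exact Or.inl (Perm.SameCycle.refl _ _)
    · rintro a b (h | ⟨h, h'⟩)
      · exact Or.inl h.symm
      · exact Or.inr ⟨h', h⟩
    · rintro a b c (h1 | ⟨h1, h1'⟩) (h2 | ⟨h2, h2'⟩)
      · exact Or.inl (h1.trans h2)
      · exact Or.inr ⟨h2.imp (·.trans h1.symm) (·.trans h1.symm), h2'⟩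
      · exact Or.inr ⟨h1, h1'.imp (·.trans h2) (·.trans h2)⟩
      · exact Or.inr ⟨h1, h2'⟩
    · intro a
      have h1 := sameCycle_apply f a
      rw [Perm.mul_apply]
      rcases eq_or_ne (f a) x with hx | hx
      · rw [hx, swap_apply_left]; rw [hx] at h1
        exact Or.inr ⟨Or.inl h1.symm, Or.inr (Perm.SameCycle.refl _ _)⟩
      rcases eq_or_ne (f a) y with hy | hy
      · rw [hy, swap_apply_right]; rw [hy] at h1
        exact Or.inr ⟨Or.inr h1.symm, Or.inl (Perm.SameCycle.refl _ _)⟩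
      rw [swap_apply_of_ne_of_ne hx hy]; exact Or.inl h1
  · have hxy := merge_xy h
    rintro (h1 | ⟨h1, h2⟩)
    · exact merge_ge h h1
    · have A : ∀ c, (f.SameCycle x c ∨ f.SameCycle y c) → (swap x y * f).SameCycle x c := by
        rintro c (hc | hc)
        · exact merge_ge h hc
        · exact hxy.trans (merge_ge h hc)
      exact (A a h1).symm.trans (A b h2)

open Finset

def cls {n : ℕ} (f : Perm (Fin n)) (x : Fin n) : Finset (Fin n) := univ.filter (fun y => f.SameCycle x y)

theorem mem_cls {n : ℕ} {f : Perm (Fin n)} {x y : Fin n} : y ∈ cls f x ↔ f.SameCycle x y := by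
  simp [cls]

theorem cls_eq {n : ℕ} {f : Perm (Fin n)} {x y : Fin n} : cls f x = cls f y ↔ f.SameCycle x y := by
  constructor
  · intro h
    rw [← mem_cls, h, mem_cls]
  · intro h
    ext z
    rw [mem_cls, mem_cls]
    exact ⟨fun h' => h.symm.trans h', fun h' => h.trans h'⟩

def blocks {n : ℕ} (f : Perm (Fin n)) : Finset (Finset (Fin n)) := univ.image (cls f)

def wt {n : ℕ} (f : Perm (Fin n)) : ℚ := ∏ B ∈ blocks f, (B.card : ℚ)

theorem cls_card_pos {n : ℕ} (f : Perm (Fin n)) (x : Fin n) : (0 : ℚ) < (cls f x).card := by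
  have : 0 < (cls f x).card := card_pos.2 ⟨x, mem_cls.2 (Perm.SameCycle.refl _ _)⟩
  exact_mod_cast this

theorem sum_inv {n : ℕ} (f : Perm (Fin n)) : ∑ x, (1 : ℚ) / (cls f x).card = (blocks f).card := by
  rw [← Finset.sum_fiberwise_of_maps_to (s := univ) (t := blocks f) (g := cls f)
    (fun x _ => mem_image_of_mem _ (mem_univ x)), card_eq_sum_ones]
  push_cast
  refine sum_congr rfl fun B hB => ?_
  obtain ⟨x, -, rfl⟩ := mem_image.1 hB
  have : ∀ z ∈ univ.filter (fun z => cls f z = cls f x), (1 : ℚ) / (cls f z).card = 1 / (cls f x).card := by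
    intro z hz
    rw [(mem_filter.1 hz).2]
  rw [sum_congr rfl this, sum_const]
  have h2 : univ.filter (fun z => cls f z = cls f x) = cls f x := by
    ext z
    simp only [mem_filter, mem_univ, true_and, mem_cls, cls_eq]
    exact ⟨fun h => h.symm, fun h => h.symm⟩
  rw [h2, nsmul_eq_mul]
  have := cls_card_pos f x
  field_simp

theorem split_card {n : ℕ} {f : Perm (Fin n)} {x y : Fin n} (h : f.SameCycle x y) :
    (blocks f).card ≤ (blocks (swap x y * f)).card := by
  have : blocks f = (blocks (swap x y * f)).image
      (fun B => univ.filter (fun z => ∃ b ∈ B, f.SameCycle b z)) := by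
    rw [blocks, blocks, image_image]
    refine image_congr fun a _ => ?_
    ext z
    simp only [mem_cls, Function.comp, mem_filter, mem_univ, true_and]
    exact ⟨fun h' => ⟨a, Perm.SameCycle.refl _ _, h'⟩, fun ⟨b, h1, h2⟩ => (split_le h h1).trans h2⟩
  rw [this]
  exact card_image_le

theorem merge_blocks {n : ℕ} {f : Perm (Fin n)} {x y : Fin n} (h : ¬ f.SameCycle x y) :
    blocks (swap x y * f) = insert (cls f x ∪ cls f y) (((blocks f).erase (cls f x)).erase (cls f y)) := by
  have h1 : ∀ a, (f.SameCycle x a ∨ f.SameCycle y a) → cls (swap x y * f) a = cls f x ∪ cls f y := by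
    intro a ha
    ext z
    rw [mem_union, mem_cls, mem_cls, mem_cls, merge_iff h]
    constructor
    · rintro (h2 | h2)
      · exact ha.imp (·.trans h2) (·.trans h2)
      · exact h2.2
    · intro h2; exact Or.inr ⟨ha, h2⟩
  have h2 : ∀ a, ¬ (f.SameCycle x a ∨ f.SameCycle y a) → cls (swap x y * f) a = cls f a := by
    intro a ha
    ext z
    rw [mem_cls, mem_cls, merge_iff h]
    tauto
  ext B
  simp only [blocks, mem_insert, mem_erase, mem_image, mem_univ, true_and]
  constructor
  · rintro ⟨a, rfl⟩
    by_cases ha : f.SameCycle x a ∨ f.SameCycle y a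
    · exact Or.inl (h1 a ha)
    · rw [h2 a ha]
      refine Or.inr ⟨?_, ?_, a, rfl⟩
      · rw [Ne, cls_eq]; exact fun h => ha (Or.inr h.symm)
      · rw [Ne, cls_eq]; exact fun h => ha (Or.inl h.symm)
  · rintro (rfl | ⟨h3, h4, a, rfl⟩)
    · exact ⟨x, h1 x (Or.inl (Perm.SameCycle.refl _ _))⟩
    · refine ⟨a, h2 a ?_⟩
      rw [Ne, cls_eq] at h3 h4
      rintro (h5 | h5)
      · exact h4 h5.symm
      · exact h3 h5.symm

theorem merge_spec {n : ℕ} {f : Perm (Fin n)} {x y : Fin n} (h : ¬ f.SameCycle x y) :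
    (blocks (swap x y * f)).card + 1 = (blocks f).card ∧
    wt (swap x y * f) * ((cls f x).card * (cls f y).card) =
      wt f * ((cls f x).card + (cls f y).card) := by
  have hx : cls f x ∈ blocks f := mem_image_of_mem _ (mem_univ x)
  have hne : cls f y ≠ cls f x := by
    rw [Ne, cls_eq]; exact fun h' => h h'.symm
  have hy : cls f y ∈ (blocks f).erase (cls f x) :=
    mem_erase.2 ⟨hne, mem_image_of_mem _ (mem_univ y)⟩
  have hn : cls f x ∪ cls f y ∉ ((blocks f).erase (cls f x)).erase (cls f y) := by
    intro h'
    simp only [mem_erase, blocks, mem_image, mem_univ, true_and] at h'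
    obtain ⟨h3, h4, a, ha⟩ := h'
    have : x ∈ cls f a := by
      rw [ha]; exact mem_union_left _ (mem_cls.2 (Perm.SameCycle.refl _ _))
    rw [mem_cls] at this
    apply h4
    rw [← ha, cls_eq]; exact this
  have hd : Disjoint (cls f x) (cls f y) := by
    rw [disjoint_left]
    intro z h1 h2
    rw [mem_cls] at h1 h2
    exact h (h1.trans h2.symm)
  constructor
  · rw [merge_blocks h, card_insert_of_notMem hn, card_erase_add_one hy, card_erase_add_one hx]
  · rw [wt, wt, merge_blocks h, prod_insert hn, card_union_of_disjoint hd,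
      ← mul_prod_erase _ _ hx, ← mul_prod_erase _ _ hy]
    push_cast
    ring

open Classical in
theorem sum_swaps {n : ℕ} (g : Perm (Fin n) → ℚ) :
    2 * ∑ τ : Perm (Fin n) with τ.IsSwap, g τ =
      ∑ x, ∑ y, if x ≠ y then g (swap x y) else 0 := by
  rw [← Finset.sum_product', ← Finset.sum_filter,
    ← Finset.sum_fiberwise_of_maps_to (t := univ.filter (fun τ : Perm (Fin n) => τ.IsSwap))
      (g := fun p : Fin n × Fin n => swap p.1 p.2), mul_sum]
  · refine sum_congr rfl fun τ hτ => ?_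
    obtain ⟨a, b, hab, rfl⟩ := (mem_filter.1 hτ).2
    have : ((univ ×ˢ univ : Finset (Fin n × Fin n)).filter (fun p => p.1 ≠ p.2)).filter
        (fun p => swap p.1 p.2 = swap a b) = {(a, b), (b, a)} := by
      ext ⟨x, y⟩
      simp only [mem_filter, mem_product, mem_univ, true_and, mem_insert, mem_singleton,
        Prod.mk.injEq]
      constructor
      · rintro ⟨hxy, h⟩
        have h1 : swap a b x = y := by rw [← h, swap_apply_left]
        rw [swap_apply_def] at h1
        split_ifs at h1 <;> grind
      · rintro (⟨rfl, rfl⟩ | ⟨rfl, rfl⟩)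
        · exact ⟨hab, rfl⟩
        · exact ⟨hab.symm, swap_comm _ _⟩
    rw [this, sum_pair (by simp; intro h; exact absurd h hab), swap_comm b a]
    ring
  · intro p hp
    rw [mem_filter] at hp ⊢
    exact ⟨mem_univ _, p.1, p.2, hp.2, rfl⟩


open Classical in
noncomputable def cnt {n : ℕ} (P : Perm (Fin n) → Prop) : ℕ → Perm (Fin n) → ℕ
  | 0, f => if P f then 1 else 0
  | b + 1, f => ∑ τ : Perm (Fin n) with τ.IsSwap, cnt P b (τ * f)

def tupEquiv {n b : ℕ} (P : Perm (Fin n) → Prop) (f : Perm (Fin n)) :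
    {τ : Fin (b + 1) → Perm (Fin n) // (∀ i, (τ i).IsSwap) ∧ P ((List.ofFn τ).reverse.prod * f)} ≃
    Σ t : {t : Perm (Fin n) // t.IsSwap}, {τ : Fin b → Perm (Fin n) // (∀ i, (τ i).IsSwap) ∧
      P ((List.ofFn τ).reverse.prod * (t.1 * f))} where
  toFun τ := ⟨⟨τ.1 0, τ.2.1 0⟩, ⟨fun i => τ.1 i.succ, fun i => τ.2.1 _, by
    have := τ.2.2
    rw [List.ofFn_succ, List.reverse_cons, List.prod_append, List.prod_singleton, mul_assoc] at this
    exact this⟩⟩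
  invFun p := ⟨Fin.cons p.1.1 p.2.1, by
    constructor
    · intro i
      refine Fin.cases ?_ (fun j => ?_) i
      · exact p.1.2
      · exact p.2.2.1 j
    · rw [List.ofFn_succ, List.reverse_cons, List.prod_append, List.prod_singleton, mul_assoc]
      exact p.2.2.2⟩
  left_inv τ := by
    apply Subtype.ext
    funext i
    refine Fin.cases ?_ (fun j => ?_) i <;> rfl
  right_inv p := by
    obtain ⟨⟨t, ht⟩, ⟨τ, h⟩⟩ := p
    rfl

theorem card_tuples {n : ℕ} (P : Perm (Fin n) → Prop) (b : ℕ) (f : Perm (Fin n)) :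
    Nat.card {τ : Fin b → Perm (Fin n) //
      (∀ i, (τ i).IsSwap) ∧ P ((List.ofFn τ).reverse.prod * f)} = cnt P b f := by
  classical
  induction b generalizing f with
  | zero =>
    simp only [cnt]
    split_ifs with h
    · rw [Nat.card_eq_one_iff_unique]
      refine ⟨⟨fun a b => Subtype.ext (Subsingleton.elim _ _)⟩, ⟨⟨Fin.elim0, fun i => i.elim0, ?_⟩⟩⟩
      simpa using h
    · rw [Nat.card_eq_zero]
      left
      refine ⟨fun a => h ?_⟩
      simpa using a.2.2
  | succ b ih =>
    rw [Nat.card_congr (tupEquiv P f), Nat.card_sigma, cnt]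
    simp only [ih]
    symm
    rw [Finset.sum_subtype _ (p := fun t : Perm (Fin n) => t.IsSwap) (by simp)]

theorem P_iff {n : ℕ} (hn : 1 ≤ n) (f : Perm (Fin n)) :
    f.partition.parts = {n} ↔ ∀ x y, f.SameCycle x y := by
  rcases Nat.lt_or_ge n 2 with h | h
  · obtain rfl : n = 1 := by omega
    have : f = 1 := Subsingleton.elim _ _
    subst this
    refine iff_of_true ?_ ?_
    · rw [Perm.parts_partition]; simp
    · intro x y; rw [Subsingleton.elim x y]
  · constructor
    · intro hp
      have hct : f.cycleType = {n} := by
        rw [← Perm.filter_parts_partition_eq_cycleType, hp, Multiset.filter_singleton, if_pos h]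
      have hc : f.IsCycle := by rw [← Perm.card_cycleType_eq_one, hct]; simp
      have hs : f.support = univ := by
        rw [← Finset.card_eq_iff_eq_univ, ← Perm.sum_cycleType, hct]; simp
      intro x y
      have : ∀ z, f z ≠ z := fun z => Perm.mem_support.1 (hs ▸ mem_univ z)
      exact hc.sameCycle (this x) (this y)
    · intro hp
      have hne : ∀ z, f z ≠ z := by
        intro z hz
        obtain ⟨w, hw⟩ : ∃ w : Fin n, w ≠ z := by
          have : Nontrivial (Fin n) := Fin.nontrivial_iff_two_le.2 h
          exact exists_ne z
        obtain ⟨i, hi⟩ := hp z w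
        rw [Perm.zpow_apply_eq_self_of_apply_eq_self hz] at hi
        exact hw hi.symm
      have hs : f.support = univ := by ext z; simp [hne z]
      have hc : f.IsCycle := ⟨⟨0, by omega⟩, hne _, fun y _ => hp _ y⟩
      rw [Perm.parts_partition, hc.cycleType, hs]
      simp

theorem cls_univ {n : ℕ} {f : Perm (Fin n)} (h : ∀ x y, f.SameCycle x y) (x : Fin n) :
    cls f x = univ := by
  ext y; simp [mem_cls, h x y]

theorem blocks_one {n : ℕ} (hn : 1 ≤ n) {f : Perm (Fin n)} (h : ∀ x y, f.SameCycle x y) :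
    blocks f = {univ} := by
  ext B
  simp only [blocks, mem_image, mem_univ, true_and, mem_singleton, cls_univ h]
  exact ⟨fun ⟨_, h⟩ => h.symm, fun h => ⟨⟨0, by omega⟩, h.symm⟩⟩

theorem blocks_card_one {n : ℕ} {f : Perm (Fin n)} (h : (blocks f).card = 1) :
    ∀ x y, f.SameCycle x y := by
  intro x y
  obtain ⟨B, hB⟩ := card_eq_one.1 h
  have hx : cls f x ∈ blocks f := mem_image_of_mem _ (mem_univ x)
  have hy : cls f y ∈ blocks f := mem_image_of_mem _ (mem_univ y)
  rw [hB, mem_singleton] at hx hy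
  exact cls_eq.1 (hx.trans hy.symm)

theorem sum_pairs {n : ℕ} (f : Perm (Fin n)) :
    ∑ x, ∑ y, (if f.SameCycle x y then (0 : ℚ) else 1 / (cls f x).card + 1 / (cls f y).card) =
      2 * n * ((blocks f).card - 1) := by
  have h1 : ∑ x, ∑ y, (if f.SameCycle x y then (0 : ℚ) else 1 / (cls f x).card) =
      n * ((blocks f).card - 1) := by
    have : ∀ x, ∑ y, (if f.SameCycle x y then (0 : ℚ) else 1 / (cls f x).card) =
        n * (1 / (cls f x).card) - 1 := by
      intro x
      have h2 : ∀ y, (if f.SameCycle x y then (0 : ℚ) else 1 / (cls f x).card) =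
        1 / (cls f x).card - (if f.SameCycle x y then 1 / ((cls f x).card : ℚ) else 0) := by
        intro y; split_ifs <;> simp
      simp only [h2]
      rw [sum_sub_distrib, ← sum_filter]
      change _ - ∑ y ∈ cls f x, _ = _
      have := cls_card_pos f x
      simp only [sum_const, nsmul_eq_mul, Finset.card_univ, Fintype.card_fin]
      field_simp
    simp only [this]
    rw [sum_sub_distrib, ← mul_sum, sum_inv]
    simp
    ring
  have h2 : ∑ x, ∑ y, (if f.SameCycle x y then (0 : ℚ) else 1 / (cls f y).card) =
      n * ((blocks f).card - 1) := by
    rw [sum_comm, ← h1]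
    refine sum_congr rfl fun x _ => sum_congr rfl fun y _ => ?_
    simp only [Perm.sameCycle_comm (x := y) (y := x)]
  have h3 : ∀ x y, (if f.SameCycle x y then (0 : ℚ) else 1 / (cls f x).card + 1 / (cls f y).card) =
      (if f.SameCycle x y then (0 : ℚ) else 1 / (cls f x).card) +
      (if f.SameCycle x y then (0 : ℚ) else 1 / (cls f y).card) := by
    intro x y; split_ifs <;> simp
  simp only [h3, sum_add_distrib, h1, h2]
  ring

theorem main_count {n : ℕ} (hn : 1 ≤ n) (b : ℕ) : ∀ f : Perm (Fin n),
    (b + 1 < (blocks f).card → cnt (fun g => g.partition.parts = {n}) b f = 0) ∧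
    ((blocks f).card = b + 1 → (n : ℚ) * cnt (fun g => g.partition.parts = {n}) b f =
      b ! * n ^ b * wt f) := by
  classical
  induction b with
  | zero =>
    intro f
    simp only [cnt]
    constructor
    · intro h
      rw [if_neg]
      intro hp
      rw [blocks_one hn ((P_iff hn f).1 hp)] at h
      simp at h
    · intro h
      have h' := blocks_card_one h
      rw [if_pos ((P_iff hn f).2 h'), wt, blocks_one hn h']
      simp
  | succ b ih =>
    intro f
    constructor
    · intro h
      rw [cnt]
      refine sum_eq_zero fun τ hτ => ?_
      obtain ⟨x, y, hxy, rfl⟩ := (mem_filter.1 hτ).2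
      refine (ih _).1 ?_
      by_cases hs : f.SameCycle x y
      · have := split_card hs; omega
      · have := (merge_spec hs).1; omega
    · intro h
      have key : ∀ x y : Fin n, (if x ≠ y then
          (n : ℚ) * (cnt (fun g => g.partition.parts = {n}) b (swap x y * f) : ℚ) else 0) =
          b ! * n ^ b * wt f *
            (if f.SameCycle x y then (0 : ℚ) else 1 / (cls f x).card + 1 / (cls f y).card) := by
        intro x y
        by_cases hs : f.SameCycle x y
        · rw [if_pos hs, mul_zero]
          split_ifs with hxy
          · have := split_card hs
            rw [(ih (swap x y * f)).1 (by omega)]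
            simp
          · rfl
        · have hxy : x ≠ y := by rintro rfl; exact hs (Perm.SameCycle.refl _ _)
          obtain ⟨h1, h2⟩ := merge_spec hs
          rw [if_pos hxy, if_neg hs, (ih (swap x y * f)).2 (by omega)]
          have hx := cls_card_pos f x
          have hy := cls_card_pos f y
          field_simp
          linear_combination h2
      have h2 := sum_swaps (fun τ => (n : ℚ) * (cnt (fun g => g.partition.parts = {n}) b (τ * f) : ℚ))
      simp only [key] at h2
      simp only [← mul_sum] at h2
      rw [sum_pairs, h] at h2
      rw [cnt]
      push_cast at h2 ⊢
      rw [Nat.factorial_succ]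
      push_cast
      linear_combination h2 / 2

theorem cnt_id {n : ℕ} (hn : 1 ≤ n) :
    cnt (fun g : Perm (Fin n) => g.partition.parts = {n}) (n - 1) 1 = (n - 1)! * n ^ (n - 2) := by
  have hcls : cls (1 : Perm (Fin n)) = fun x => {x} := by
    funext x; ext y; rw [mem_cls, Perm.sameCycle_one, mem_singleton, eq_comm]
  have hb : (blocks (1 : Perm (Fin n))).card = n := by
    rw [blocks, hcls, Finset.card_image_of_injective _ Finset.singleton_injective]; simp
  have hw : wt (1 : Perm (Fin n)) = 1 := by
    rw [wt, blocks, hcls]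
    refine prod_eq_one fun B hB => ?_
    obtain ⟨x, -, rfl⟩ := mem_image.1 hB
    simp
  have h := (main_count hn (n - 1) 1).2 (by omega)
  rw [hw, mul_one] at h
  have h' : n * cnt (fun g : Perm (Fin n) => g.partition.parts = {n}) (n - 1) 1 =
    (n - 1)! * n ^ (n - 1) := by exact_mod_cast h
  rcases Nat.lt_or_ge n 2 with h2 | h2
  · obtain rfl : n = 1 := by omega
    simpa using h'
  · apply Nat.eq_of_mul_eq_mul_left (show 0 < n by omega)
    rw [h', show n - 1 = (n - 2) + 1 by omega, _root_.pow_succ]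
    ring

theorem cnt_sum {n : ℕ} (P : Perm (Fin n) → Prop) [DecidablePred P] (b : ℕ) (f : Perm (Fin n)) :
    cnt P b f = ∑ s : Perm (Fin n) with P s, cnt (fun g => g = s) b f := by
  induction b generalizing f with
  | zero =>
    simp only [cnt]
    by_cases h : P f
    · rw [if_pos h, Finset.sum_eq_single f]
      · simp
      · intro s _ hs
        rw [if_neg (fun h' => hs h'.symm)]
      · intro h'
        exact absurd (mem_filter.2 ⟨mem_univ f, h⟩) h'
    · rw [if_neg h, Finset.sum_eq_zero]
      intro s hs
      rw [if_neg]
      rintro rfl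
      exact h (mem_filter.1 hs).2
  | succ b ih =>
    simp only [cnt]
    rw [sum_comm]
    exact sum_congr rfl fun τ _ => ih _

theorem isSwap_conj {n : ℕ} {t : Perm (Fin n)} (g : Perm (Fin n)) (h : t.IsSwap) :
    (g * t * g⁻¹).IsSwap := by
  obtain ⟨x, y, hxy, rfl⟩ := h
  refine ⟨g x, g y, fun h => hxy (g.injective h), ?_⟩
  rw [mul_swap_eq_swap_mul, mul_inv_cancel_right]

theorem cnt_conj {n : ℕ} (g s : Perm (Fin n)) (b : ℕ) (f : Perm (Fin n)) :
    cnt (fun h => h = g * s * g⁻¹) b (g * f * g⁻¹) = cnt (fun h => h = s) b f := by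
  classical
  induction b generalizing f with
  | zero => simp [cnt]
  | succ b ih =>
    simp only [cnt]
    symm
    refine sum_equiv (MulAut.conj g).toEquiv ?_ ?_
    · intro t
      simp only [mem_filter, mem_univ, true_and]
      constructor
      · intro h; exact isSwap_conj g h
      · intro h
        have := isSwap_conj g⁻¹ h
        simpa [mul_assoc] using this
    · intro t _
      rw [← ih]
      congr 1
      simp [mul_assoc]

theorem cnt_P {n : ℕ} (hn : 1 ≤ n) [DecidablePred (fun s : Perm (Fin n) => s.partition.parts = {n})] :
    (univ.filter (fun s : Perm (Fin n) => s.partition.parts = {n})).card = (n - 1)! := by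
  rcases Nat.lt_or_ge n 2 with h | h
  · obtain rfl : n = 1 := by omega
    rw [filter_true_of_mem]
    · simp
    · intro s _
      rw [P_iff hn]
      intro x y; rw [Subsingleton.elim x y]
  · have h1 := Perm.card_of_cycleType_singleton (α := Fin n) h (by simp)
    simp only [Fintype.card_fin, Nat.choose_self, mul_one] at h1
    rw [← h1]
    congr 1
    ext s
    simp only [mem_filter, mem_univ, true_and]
    constructor
    · intro hp
      rw [← Perm.filter_parts_partition_eq_cycleType, hp, Multiset.filter_singleton, if_pos h]
    · intro hp
      rw [Perm.parts_partition, ← Perm.sum_cycleType, hp]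
      simp

theorem trivial_iff {n : ℕ} (f : Perm (Fin n)) :
    f.partition.parts = (trivialPartition n).parts ↔ f = 1 := by
  constructor
  · intro h
    rw [← Perm.cycleType_eq_zero, ← Perm.filter_parts_partition_eq_cycleType, h,
      Multiset.filter_eq_nil]
    intro a ha
    rw [Multiset.eq_of_mem_replicate ha]
    decide
  · rintro rfl
    rw [Perm.parts_partition]
    simp [trivialPartition]

def hurEquiv (n b : ℕ) (P : Perm (Fin n) → Prop) :
    {p : Perm (Fin n) × (Fin b → Perm (Fin n)) //
      p.1.partition.parts = (trivialPartition n).parts ∧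
      (∀ i, (p.2 i).IsSwap) ∧ P ((List.ofFn p.2).reverse.prod * p.1)} ≃
    {τ : Fin b → Perm (Fin n) // (∀ i, (τ i).IsSwap) ∧ P ((List.ofFn τ).reverse.prod * 1)} where
  toFun p := ⟨p.1.2, p.2.2.1, by
    have := p.2.2.2
    rwa [(trivial_iff _).1 p.2.1] at this⟩
  invFun τ := ⟨(1, τ.1), (trivial_iff _).2 rfl, τ.2.1, τ.2.2⟩
  left_inv p := Subtype.ext (Prod.ext ((trivial_iff _).1 p.2.1).symm rfl)
  right_inv τ := rfl

end CycFact

/-- For a fixed `n`-cycle `σ`, the number of `(n−1)`-tuples of transpositions with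
`τ_{n−1} ⋯ τ₁ = σ` equals `n^{n−2}`; equivalently,
`N((1^n), (n); n−1) = (n−1)! ⋅ n^{n−2}`. -/
theorem count_transposition_factorizations_of_cycle (n : ℕ) (hn : 1 ≤ n)
    (σ : Equiv.Perm (Fin n)) (hσ : σ.partition.parts = {n}) :
    Nat.card {τ : Fin (n - 1) → Equiv.Perm (Fin n) //
        (∀ i, (τ i).IsSwap) ∧ (List.ofFn τ).reverse.prod = σ} = n ^ (n - 2) ∧
    hurwitzN n (n - 1) (trivialPartition n) (onePartPartition n hn) =
      (n - 1)! * n ^ (n - 2) := by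
  classical
  constructor
  · have h1 := CycFact.card_tuples (fun g => g = σ) (n - 1) 1
    simp only [mul_one] at h1
    rw [h1]
    have h2 := CycFact.cnt_sum (fun g : Perm (Fin n) => g.partition.parts = {n}) (n - 1) 1
    rw [CycFact.cnt_id hn] at h2
    have h3 : ∀ s ∈ Finset.univ.filter (fun g : Perm (Fin n) => g.partition.parts = {n}),
        CycFact.cnt (fun g => g = s) (n - 1) 1 = CycFact.cnt (fun g => g = σ) (n - 1) 1 := by
      intro s hs
      have hs' := (Finset.mem_filter.1 hs).2
      have hc : IsConj σ s := by
        rw [Perm.partition_eq_of_isConj]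
        exact Nat.Partition.ext (hσ.trans hs'.symm)
      obtain ⟨g, rfl⟩ := isConj_iff.1 hc
      have := CycFact.cnt_conj g σ (n - 1) 1
      rwa [mul_one, mul_inv_cancel] at this
    rw [Finset.sum_congr rfl h3, Finset.sum_const, CycFact.cnt_P hn, smul_eq_mul] at h2
    exact (Nat.eq_of_mul_eq_mul_left (Nat.factorial_pos _) h2).symm
  · rw [← CycFact.cnt_id hn, ← CycFact.card_tuples]
    exact Nat.card_congr (CycFact.hurEquiv n (n - 1) (fun g => g.partition.parts = {n}))
end
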